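/- arXiv:1007.1118 — 5 statements merged into one kernel-verified Lean document; each statement's English description precedes it below -/
import Mathlib

section
/- Let Γ be the finite simple graph on vertices {A, B, C, X, Y} with edge set {AB, AC, BC, BX, BY, CX, CY, XY} (so A, B, C generate a copy of ℤ³, B, C, X, Y generate a copy of ℤ⁴, and there are no edges between A and either of X, Y). Let G be the subgroup of A(Γ) generated by the four elements A·B, A·C, X, Y (products of vertex generators). Let Γ' be the graph on four vertices {X', Y', P, Q} with edge set {X'Y', X'P, Y'P, PQ} (a triangle on X', Y', P with one extra edge from P to Q). Then G is isomorphic to the right-angled Artin group A(Γ'). -/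
/-- The relators of the right-angled Artin group on a simple graph `Γ`:
one commutator for each edge. -/
def raagRels {V : Type*} (Γ : SimpleGraph V) : Set (FreeGroup V) :=
  {r | ∃ u v : V, Γ.Adj u v ∧
    r = FreeGroup.of u * FreeGroup.of v * (FreeGroup.of u)⁻¹ * (FreeGroup.of v)⁻¹}

/-- The graph on vertices `A = 0, B = 1, C = 2, X = 3, Y = 4` with edge set
`{AB, AC, BC, BX, BY, CX, CY, XY}`. -/
def gammaABCXY : SimpleGraph (Fin 5) :=
  SimpleGraph.fromRel (fun i j => (i, j) ∈
    ([(0,1),(0,2),(1,2),(1,3),(1,4),(2,3),(2,4),(3,4)] : List (Fin 5 × Fin 5)))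

/-- The graph on vertices `X' = 0, Y' = 1, P = 2, Q = 3`: a triangle on `X', Y', P`
with one extra edge from `P` to `Q`. -/
def gammaTriEdge : SimpleGraph (Fin 4) :=
  SimpleGraph.fromRel (fun i j => (i, j) ∈
    ([(0,1),(0,2),(1,2),(2,3)] : List (Fin 4 × Fin 4)))

/-- A relator of a right-angled Artin group dies under any map of the vertices
sending adjacent vertices to commuting elements. -/
theorem raagRels_lift_eq_one {V H : Type*} [Group H] {Γ : SimpleGraph V} {f : V → H}
    (hf : ∀ u v, Γ.Adj u v → Commute (f u) (f v)) :
    ∀ r ∈ raagRels Γ, FreeGroup.lift f r = 1 := by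
  rintro r ⟨u, v, huv, rfl⟩
  simp [(hf u v huv).eq]

/-- Adjacent vertex generators of a right-angled Artin group commute. -/
theorem commute_of_of_adj {V : Type*} {Γ : SimpleGraph V} {u v : V} (huv : Γ.Adj u v) :
    Commute (PresentedGroup.of (rels := raagRels Γ) u) (PresentedGroup.of v) := by
  have h : PresentedGroup.mk (raagRels Γ) _ = 1 :=
    PresentedGroup.one_of_mem ⟨u, v, huv, rfl⟩
  simp only [map_mul, map_inv] at h
  exact mul_inv_eq_iff_eq_mul.mp (mul_inv_eq_one.mp h)

/-- The homomorphism `X' ↦ X`, `Y' ↦ Y`, `P ↦ B * C⁻¹`, `Q ↦ A * B`. -/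
def triEdgeHom :
    PresentedGroup (raagRels gammaTriEdge) →* PresentedGroup (raagRels gammaABCXY) :=
  PresentedGroup.toGroup (f := ![PresentedGroup.of 3, PresentedGroup.of 4,
    PresentedGroup.of 1 * (PresentedGroup.of 2)⁻¹,
    PresentedGroup.of 0 * PresentedGroup.of 1]) <| raagRels_lift_eq_one <| by
  have h (u v : Fin 5) (huv : gammaABCXY.Adj u v) := commute_of_of_adj huv
  have hXY := h 3 4 (by simp [gammaABCXY])
  have hBX := h 1 3 (by simp [gammaABCXY])
  have hBY := h 1 4 (by simp [gammaABCXY])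
  have hCX := h 2 3 (by simp [gammaABCXY])
  have hCY := h 2 4 (by simp [gammaABCXY])
  have hAB := h 0 1 (by simp [gammaABCXY])
  have hAC := h 0 2 (by simp [gammaABCXY])
  have hBC := h 1 2 (by simp [gammaABCXY])
  have hPX := hBX.mul_left hCX.inv_left
  have hPY := hBY.mul_left hCY.inv_left
  have hQP := (hAB.mul_right hAC.inv_right).mul_left
    ((Commute.refl _).mul_right hBC.inv_right)
  intro u v huv
  fin_cases u <;> fin_cases v <;> simp [gammaTriEdge] at huv ⊢ <;>
    first | assumption | (apply Commute.symm; assumption)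

/-- The left inverse of `triEdgeHom` that sends `A` to `Q`, kills `B` and sends `C` to `P⁻¹`. -/
def triEdgeRetraction :
    PresentedGroup (raagRels gammaABCXY) →* PresentedGroup (raagRels gammaTriEdge) :=
  PresentedGroup.toGroup (f := ![PresentedGroup.of 3, 1, (PresentedGroup.of 2)⁻¹,
    PresentedGroup.of 0, PresentedGroup.of 1]) <| raagRels_lift_eq_one <| by
  have h (u v : Fin 4) (huv : gammaTriEdge.Adj u v) := commute_of_of_adj huv
  have hXY := h 0 1 (by simp [gammaTriEdge])
  have hXP := h 0 2 (by simp [gammaTriEdge])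
  have hYP := h 1 2 (by simp [gammaTriEdge])
  have hPQ := h 2 3 (by simp [gammaTriEdge])
  intro u v huv
  fin_cases u <;> fin_cases v <;> simp [gammaABCXY] at huv ⊢ <;>
    first | assumption | (apply Commute.symm; assumption)

theorem triEdgeHom_injective : Function.Injective triEdgeHom := by
  have h : triEdgeRetraction.comp triEdgeHom = MonoidHom.id _ := by
    ext i
    fin_cases i <;> simp [triEdgeHom, triEdgeRetraction]
  exact Function.LeftInverse.injective (g := triEdgeRetraction) (DFunLike.congr_fun h)

theorem range_triEdgeHom : triEdgeHom.range = Subgroup.closure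
    {PresentedGroup.of (rels := raagRels gammaABCXY) 0 * PresentedGroup.of 1,
     PresentedGroup.of (rels := raagRels gammaABCXY) 0 * PresentedGroup.of 2,
     PresentedGroup.of (rels := raagRels gammaABCXY) 3,
     PresentedGroup.of (rels := raagRels gammaABCXY) 4} := by
  have hBC : Commute (PresentedGroup.of (rels := raagRels gammaABCXY) 1)
    (PresentedGroup.of 2) := commute_of_of_adj (by simp [gammaABCXY])
  have hAC : Commute (PresentedGroup.of (rels := raagRels gammaABCXY) 0)
    (PresentedGroup.of 2) := commute_of_of_adj (by simp [gammaABCXY])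
  have hAB : Commute (PresentedGroup.of (rels := raagRels gammaABCXY) 0)
    (PresentedGroup.of 1) := commute_of_of_adj (by simp [gammaABCXY])
  apply le_antisymm
  · rw [MonoidHom.range_eq_map, ← PresentedGroup.closure_range_of, MonoidHom.map_closure,
      Subgroup.closure_le]
    rintro _ ⟨_, ⟨i, rfl⟩, rfl⟩
    fin_cases i
    · exact Subgroup.subset_closure (by simp [triEdgeHom])
    · exact Subgroup.subset_closure (by simp [triEdgeHom])
    · have hP : PresentedGroup.of (rels := raagRels gammaABCXY) 1 * (PresentedGroup.of 2)⁻¹ =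
          (PresentedGroup.of 0 * PresentedGroup.of 1) *
            (PresentedGroup.of 0 * PresentedGroup.of 2)⁻¹ := by
        rw [hAB.eq, hAC.eq]
        group
      simp only [triEdgeHom, PresentedGroup.toGroup.of]
      change PresentedGroup.of 1 * (PresentedGroup.of 2)⁻¹ ∈ _
      rw [hP]
      exact mul_mem (Subgroup.subset_closure (by simp))
        (inv_mem (Subgroup.subset_closure (by simp)))
    · exact Subgroup.subset_closure (by simp [triEdgeHom])
  · rw [Subgroup.closure_le]
    rintro _ (rfl | rfl | rfl | rfl)
    · exact ⟨PresentedGroup.of 3, by simp [triEdgeHom]⟩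
    · refine ⟨PresentedGroup.of 3 * (PresentedGroup.of 2)⁻¹, ?_⟩
      simp [triEdgeHom, mul_assoc, hBC.inv_right.eq]
    · exact ⟨PresentedGroup.of 0, by simp [triEdgeHom]⟩
    · exact ⟨PresentedGroup.of 1, by simp [triEdgeHom]⟩

/-- The subgroup of `A(Γ)` generated by `AB, AC, X, Y` is isomorphic to the
right-angled Artin group on a triangle with an extra pendant edge. -/
theorem subgroup_iso_triangle_with_edge :
    Nonempty (↥(Subgroup.closure
      {PresentedGroup.of (rels := raagRels gammaABCXY) 0 * PresentedGroup.of 1,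
       PresentedGroup.of (rels := raagRels gammaABCXY) 0 * PresentedGroup.of 2,
       PresentedGroup.of (rels := raagRels gammaABCXY) 3,
       PresentedGroup.of (rels := raagRels gammaABCXY) 4})
      ≃* PresentedGroup (raagRels gammaTriEdge)) := by
  exact ⟨((MonoidHom.ofInjective triEdgeHom_injective).trans
    (MulEquiv.subgroupCongr range_triEdgeHom)).symm⟩
end

section
/- Let C₄ be the square graph on vertices {w, x, y, z} with edge set {wx, xy, yz, zw}, so that A(C₄) ≅ F₂ × F₂. Consider the eight elements u₁ = wx⁻¹, u₂ = wx, u₃ = xy⁻¹, u₄ = xy, u₅ = yz⁻¹, u₆ = yz, u₇ = wz⁻¹, u₈ = wz of A(C₄) (each a product of two commuting vertex generators). Let Λ be the graph on eight vertices with edge set {{1,2},{3,4},{5,6},{7,8}} (this is the commutation graph of u₁,…,u₈: uᵢ and uⱼ commute in A(C₄) exactly when {i,j} is one of these four pairs, and the same is true of any nonzero powers of the uᵢ). Then for every choice of nonzero integers n₁,…,n₈, the group homomorphism A(Λ) → A(C₄) sending the i-th vertex generator to uᵢ^{nᵢ} is not injective; that is, no nonzero powers of u₁,…,u₈ form a right-angled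 Artin system for the subgroup they generate. -/
/-- The square graph `C₄` on vertices `w = 0, x = 1, y = 2, z = 3` with
edge set `{wx, xy, yz, zw}`, so `A(C₄) ≅ F₂ × F₂`. -/
def sqC4 : SimpleGraph (Fin 4) :=
  SimpleGraph.fromRel (fun i j => (i, j) ∈
    ([(0,1),(1,2),(2,3),(3,0)] : List (Fin 4 × Fin 4)))

/-- The eight elements `wx⁻¹, wx, xy⁻¹, xy, yz⁻¹, yz, wz⁻¹, wz` of `A(C₄)`. -/
def uElt : Fin 8 → PresentedGroup (raagRels sqC4) :=
  ![PresentedGroup.of 0 * (PresentedGroup.of 1)⁻¹,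
    PresentedGroup.of 0 * PresentedGroup.of 1,
    PresentedGroup.of 1 * (PresentedGroup.of 2)⁻¹,
    PresentedGroup.of 1 * PresentedGroup.of 2,
    PresentedGroup.of 2 * (PresentedGroup.of 3)⁻¹,
    PresentedGroup.of 2 * PresentedGroup.of 3,
    PresentedGroup.of 0 * (PresentedGroup.of 3)⁻¹,
    PresentedGroup.of 0 * PresentedGroup.of 3]

/-- The commutation graph of `u₁, …, u₈`: four disjoint edges. -/
def lambda8 : SimpleGraph (Fin 8) :=
  SimpleGraph.fromRel (fun i j => (i, j) ∈
    ([(0,1),(2,3),(4,5),(6,7)] : List (Fin 8 × Fin 8)))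

/-- Vertex generators of adjacent vertices commute in a right-angled Artin group. -/
theorem commute_of_raag_adj {V : Type*} {Γ : SimpleGraph V} {u v : V} (h : Γ.Adj u v) :
    Commute (PresentedGroup.of u : PresentedGroup (raagRels Γ)) (PresentedGroup.of v) := by
  have hr : PresentedGroup.mk (raagRels Γ) (FreeGroup.of u * FreeGroup.of v *
      (FreeGroup.of u)⁻¹ * (FreeGroup.of v)⁻¹) = 1 :=
    PresentedGroup.one_of_mem ⟨u, v, h, rfl⟩
  simp only [map_mul, map_inv] at hr
  exact mul_inv_eq_iff_eq_mul.mp (mul_inv_eq_one.mp hr)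

/-- If `a` and `b` commute, suitable powers of powers of `a * b` and `a * b⁻¹` combine to a
power of `b`. -/
theorem Commute.zpow_mul_zpow_mul_inv {G : Type*} [Group G] {a b : G} (h : Commute a b)
    (k l : ℤ) : ((a * b) ^ k) ^ l * (((a * b⁻¹) ^ l) ^ k)⁻¹ = b ^ (2 * (k * l)) := by
  rw [← zpow_mul, ← zpow_mul, mul_comm l k, h.mul_zpow, h.inv_right.mul_zpow, inv_zpow,
    (h.zpow_zpow (k * l) (k * l)).eq, ((h.zpow_zpow (k * l) (k * l)).inv_right).eq,
    mul_inv_rev, inv_inv, two_mul, zpow_add]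
  group

/-- Nonzero powers of the upper and lower elementary unipotents of `SL(2, ℤ)` do not commute. -/
theorem not_commute_T_zpow_conj_S {k l : ℤ} (hk : k ≠ 0) (hl : l ≠ 0) :
    ¬ Commute (ModularGroup.T ^ k)
      ((ModularGroup.S * ModularGroup.T * ModularGroup.S⁻¹) ^ l) := by
  intro h
  rw [conj_zpow] at h
  have h00 := congrArg (fun g : Matrix.SpecialLinearGroup (Fin 2) ℤ => g.1 0 0) h.eq
  simp [ModularGroup.coe_T_zpow, ModularGroup.coe_S, Matrix.SpecialLinearGroup.coe_inv,
    Matrix.mul_apply, Fin.sum_univ_two, Matrix.adjugate_fin_two, hk, hl] at h00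

/-- The representation of `A(Λ)` in `SL(2, ℤ)` that sends the second and the fourth vertex
generators to elementary unipotents and kills the others. -/
def lambda8ToSL : PresentedGroup (raagRels lambda8) →* Matrix.SpecialLinearGroup (Fin 2) ℤ :=
  PresentedGroup.toGroup
    (f := ![1, ModularGroup.T, 1, ModularGroup.S * ModularGroup.T * ModularGroup.S⁻¹, 1, 1, 1, 1])
    (by
      rintro r ⟨u, v, h, rfl⟩
      fin_cases u <;> fin_cases v <;> simp [lambda8] at h ⊢)

/-- No nonzero powers of `u₁, …, u₈` form a right-angled Artin system: for any
nonzero exponents, the homomorphism `A(Λ) → A(C₄)` sending the `i`-th vertex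
generator to `uᵢ^{nᵢ}` is not injective. -/
theorem no_raag_system_of_powers (n : Fin 8 → ℤ) (hn : ∀ i, n i ≠ 0)
    (φ : PresentedGroup (raagRels lambda8) →* PresentedGroup (raagRels sqC4))
    (hφ : ∀ i, φ (PresentedGroup.of i) = uElt i ^ n i) :
    ¬ Function.Injective φ := by
  intro hinj
  have hwx : Commute (PresentedGroup.of 0 : PresentedGroup (raagRels sqC4))
      (PresentedGroup.of 1) := commute_of_raag_adj (by simp [sqC4])
  have hxy : Commute (PresentedGroup.of 1 : PresentedGroup (raagRels sqC4))
      (PresentedGroup.of 2) := commute_of_raag_adj (by simp [sqC4])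
  set g : PresentedGroup (raagRels lambda8) :=
    PresentedGroup.of 1 ^ n 0 * (PresentedGroup.of 0 ^ n 1)⁻¹ with hg
  set h : PresentedGroup (raagRels lambda8) :=
    PresentedGroup.of 3 ^ n 2 * (PresentedGroup.of 2 ^ n 3)⁻¹ with hh
  have hφg : φ g = PresentedGroup.of 1 ^ (2 * (n 1 * n 0)) := by
    simpa [hg, hφ, uElt] using hwx.zpow_mul_zpow_mul_inv (n 1) (n 0)
  have hφh : φ h = PresentedGroup.of 2 ^ (2 * (n 3 * n 2)) := by
    simpa [hh, hφ, uElt] using hxy.zpow_mul_zpow_mul_inv (n 3) (n 2)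
  have hgh : Commute g h := hinj <| by
    rw [map_mul φ g h, map_mul φ h g, hφg, hφh]
    exact hxy.zpow_zpow _ _
  apply not_commute_T_zpow_conj_S (hn 0) (hn 2)
  simpa [hg, hh, lambda8ToSL] using hgh.map lambda8ToSL
end

section
/- Let C₄ be the square graph on vertices {w, x, y, z} with edge set {wx, xy, yz, zw}, so that A(C₄) ≅ F₂ × F₂, and set g = y·z ∈ A(C₄). For every nonzero integer N, the subgroup G_N of A(C₄) generated by {w^N, x^N, g^N} is not isomorphic, as an abstract group, to any right-angled Artin group: for every finite simple graph Δ there is no group isomorphism G_N ≅ A(Δ). -/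
namespace RAAG

/-- The homomorphism out of a right-angled Artin group determined by a family of elements which
commute along the edges. -/
def lift {V G : Type*} [Group G] {Γ : SimpleGraph V} (f : V → G)
    (hf : ∀ u v, Γ.Adj u v → Commute (f u) (f v)) : PresentedGroup (raagRels Γ) →* G :=
  PresentedGroup.toGroup (f := f) (by
    rintro r ⟨u, v, huv, rfl⟩
    simp [(hf u v huv).eq])

@[simp]
theorem lift_of {V G : Type*} [Group G] {Γ : SimpleGraph V} (f : V → G)
    (hf : ∀ u v, Γ.Adj u v → Commute (f u) (f v)) (v : V) :
    lift f hf (PresentedGroup.of v) = f v :=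
  PresentedGroup.toGroup.of _

theorem commute_of_adj {V : Type*} {Γ : SimpleGraph V} {u v : V} (h : Γ.Adj u v) :
    Commute (PresentedGroup.of (rels := raagRels Γ) u) (PresentedGroup.of v) := by
  have h1 : PresentedGroup.mk (raagRels Γ)
      (FreeGroup.of u * FreeGroup.of v * (FreeGroup.of u)⁻¹ * (FreeGroup.of v)⁻¹) = 1 :=
    PresentedGroup.one_of_mem ⟨u, v, h, rfl⟩
  simp only [map_mul, map_inv] at h1
  exact mul_inv_eq_iff_eq_mul.mp (mul_inv_eq_one.mp h1)

/-- A vertex adjacent to all the others gives a central generator. -/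
theorem of_mem_center {V : Type*} {Γ : SimpleGraph V} {v : V} (hv : ∀ u, u ≠ v → Γ.Adj u v) :
    PresentedGroup.of (rels := raagRels Γ) v ∈ Subgroup.center _ := by
  rw [Subgroup.mem_center_iff]
  intro g
  have : g ∈ Subgroup.centralizer {PresentedGroup.of (rels := raagRels Γ) v} := by
    apply PresentedGroup.generated_by
    intro u
    rw [Subgroup.mem_centralizer_singleton_iff]
    rcases eq_or_ne u v with rfl | h
    · rfl
    · exact commute_of_adj (hv u h)
  exact Subgroup.mem_centralizer_singleton_iff.mp this

/-- Homomorphisms from a right-angled Artin group to a commutative group are families of elements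
indexed by the vertices. -/
def homEquiv {V G : Type*} [CommGroup G] (Γ : SimpleGraph V) :
    (PresentedGroup (raagRels Γ) →* G) ≃ (V → G) where
  toFun φ v := φ (PresentedGroup.of v)
  invFun f := lift f fun _ _ _ => Commute.all _ _
  left_inv φ := PresentedGroup.ext fun v => by simp
  right_inv f := by ext; simp

end RAAG

/-- The Heisenberg group over a ring `R`, in coordinates. -/
@[ext]
structure HeisenbergGroup (R : Type*) where
  x : R
  y : R
  z : R

namespace HeisenbergGroup

variable {R : Type*} [CommRing R]

instance : Mul (HeisenbergGroup R) := ⟨fun g h => ⟨g.x + h.x, g.y + h.y, g.z + h.z + g.x * h.y⟩⟩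

instance : One (HeisenbergGroup R) := ⟨⟨0, 0, 0⟩⟩

instance : Inv (HeisenbergGroup R) := ⟨fun g => ⟨-g.x, -g.y, -g.z + g.x * g.y⟩⟩

@[simp] theorem mul_x (g h : HeisenbergGroup R) : (g * h).x = g.x + h.x := rfl
@[simp] theorem mul_y (g h : HeisenbergGroup R) : (g * h).y = g.y + h.y := rfl
@[simp] theorem mul_z (g h : HeisenbergGroup R) : (g * h).z = g.z + h.z + g.x * h.y := rfl
@[simp] theorem one_x : (1 : HeisenbergGroup R).x = 0 := rfl
@[simp] theorem one_y : (1 : HeisenbergGroup R).y = 0 := rfl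
@[simp] theorem one_z : (1 : HeisenbergGroup R).z = 0 := rfl
@[simp] theorem inv_x (g : HeisenbergGroup R) : g⁻¹.x = -g.x := rfl
@[simp] theorem inv_y (g : HeisenbergGroup R) : g⁻¹.y = -g.y := rfl
@[simp] theorem inv_z (g : HeisenbergGroup R) : g⁻¹.z = -g.z + g.x * g.y := rfl

instance : Group (HeisenbergGroup R) :=
  Group.ofLeftAxioms
    (fun _ _ _ => by ext <;> simp <;> ring)
    (fun _ => by ext <;> simp)
    (fun _ => by ext <;> simp)

/-- The first coordinate as a homomorphism. -/
def xHom : HeisenbergGroup R →* Multiplicative R where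
  toFun g := Multiplicative.ofAdd g.x
  map_one' := rfl
  map_mul' _ _ := rfl

/-- The second coordinate as a homomorphism. -/
def yHom : HeisenbergGroup R →* Multiplicative R where
  toFun g := Multiplicative.ofAdd g.y
  map_one' := rfl
  map_mul' _ _ := rfl

@[simp]
theorem zpow_x (g : HeisenbergGroup R) (n : ℤ) : (g ^ n).x = n * g.x := by
  simpa [xHom, ← ofAdd_zsmul] using map_zpow xHom g n

@[simp]
theorem zpow_y (g : HeisenbergGroup R) (n : ℤ) : (g ^ n).y = n * g.y := by
  simpa [yHom, ← ofAdd_zsmul] using map_zpow yHom g n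

theorem _root_.Commute.heisenberg_x_mul_y {g h : HeisenbergGroup R} (hgh : Commute g h) :
    g.x * h.y = h.x * g.y := by
  have := congrArg z hgh.eq
  simp only [mul_z] at this
  linear_combination this

end HeisenbergGroup

namespace SquareSubgroup

open PresentedGroup

/-- The subgroup of `A(C₄)` generated by `w ^ N`, `x ^ N` and `(y * z) ^ N`. -/
abbrev powSubgroup (N : ℤ) : Subgroup (PresentedGroup (raagRels sqC4)) :=
  Subgroup.closure
    {of (rels := raagRels sqC4) 0 ^ N, of (rels := raagRels sqC4) 1 ^ N,
      (of (rels := raagRels sqC4) 2 * of 3) ^ N}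

/-- The generator `w ^ N`. -/
def wGen (N : ℤ) : powSubgroup N := ⟨of 0 ^ N, Subgroup.subset_closure (by simp)⟩

/-- The generator `x ^ N`. -/
def xGen (N : ℤ) : powSubgroup N := ⟨of 1 ^ N, Subgroup.subset_closure (by simp)⟩

/-- The generator `(y * z) ^ N`. -/
def gGen (N : ℤ) : powSubgroup N := ⟨(of 2 * of 3) ^ N, Subgroup.subset_closure (by simp)⟩

theorem hom_ext {N : ℤ} {G : Type*} [Group G] {φ ψ : powSubgroup N →* G}
    (hw : φ (wGen N) = ψ (wGen N)) (hx : φ (xGen N) = ψ (xGen N))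
    (hg : φ (gGen N) = ψ (gGen N)) : φ = ψ := by
  apply MonoidHom.eq_of_eqOn_dense Subgroup.closure_closure_coe_preimage
  rintro ⟨k, hk⟩ hk'
  rcases hk' with rfl | rfl | rfl
  · exact hw
  · exact hx
  · exact hg

theorem commute_wGen_xGen (N : ℤ) : Commute (wGen N) (xGen N) := by
  have h : Commute (of (rels := raagRels sqC4) 0) (of 1) :=
    RAAG.commute_of_adj (by simp [sqC4])
  exact Subtype.ext (h.zpow_zpow N N)

theorem commute_wGen_conj_xGen (N : ℤ) :
    Commute (wGen N) (gGen N * xGen N * (gGen N)⁻¹) := by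
  have h01 : Commute (of (rels := raagRels sqC4) 0) (of 1) :=
    RAAG.commute_of_adj (by simp [sqC4])
  have h03 : Commute (of (rels := raagRels sqC4) 0) (of 3) :=
    RAAG.commute_of_adj (by simp [sqC4])
  have h21 : Commute (of (rels := raagRels sqC4) 2) (of 1) :=
    RAAG.commute_of_adj (by simp [sqC4])
  have h23 : Commute (of (rels := raagRels sqC4) 2) (of 3) :=
    RAAG.commute_of_adj (by simp [sqC4])
  have hconj : (of (rels := raagRels sqC4) 2 * of 3) ^ N * of 1 ^ N *
      ((of 2 * of 3) ^ N)⁻¹ = of 3 ^ N * of 1 ^ N * (of 3 ^ N)⁻¹ := by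
    have h : Commute (of (rels := raagRels sqC4) 2 ^ N) (of 3 ^ N * of 1 ^ N * (of 3 ^ N)⁻¹) :=
      ((h23.zpow_zpow N N).mul_right (h21.zpow_zpow N N)).mul_right (h23.zpow_zpow N N).inv_right
    rw [h23.mul_zpow, mul_inv_rev, ← mul_inv_eq_iff_eq_mul.mpr h.eq]
    group
  apply Subtype.ext
  change of 0 ^ N * ((of 2 * of 3) ^ N * of 1 ^ N * ((of 2 * of 3) ^ N)⁻¹) =
    (of 2 * of 3) ^ N * of 1 ^ N * ((of 2 * of 3) ^ N)⁻¹ * of 0 ^ N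
  rw [hconj]
  exact ((h03.zpow_zpow N N).mul_right (h01.zpow_zpow N N)).mul_right (h03.zpow_zpow N N).inv_right

/-- Homomorphisms to the additive group of a field in which `N` is invertible are triples. -/
noncomputable def homEquiv {N : ℤ} {F : Type*} [Field F] (hN : (N : F) ≠ 0) :
    (powSubgroup N →* Multiplicative F) ≃ F × F × F where
  toFun φ := ((φ (wGen N)).toAdd, (φ (xGen N)).toAdd, (φ (gGen N)).toAdd)
  invFun s := (RAAG.lift (Γ := sqC4) (fun v => Multiplicative.ofAdd
    (![s.1 / N, s.2.1 / N, s.2.2 / N, 0] v)) fun _ _ _ => Commute.all _ _).comp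
      (powSubgroup N).subtype
  left_inv φ := by
    apply hom_ext <;> apply Multiplicative.toAdd.injective <;>
      simp [wGen, xGen, gGen, mul_div_cancel₀, hN]
  right_inv s := by
    simp [wGen, xGen, gGen, mul_div_cancel₀, hN]

/-- `w` and `y` go to the standard generators of the Heisenberg group, `x` and `z` to `1`. -/
def wyHeisenberg (F : Type*) [Field F] : PresentedGroup (raagRels sqC4) →* HeisenbergGroup F :=
  RAAG.lift ![⟨1, 0, 0⟩, 1, ⟨0, 1, 0⟩, 1] (by
    intro u v h
    fin_cases u <;> fin_cases v <;> simp_all [sqC4])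

/-- `x` and `z` go to the standard generators of the Heisenberg group, `w` and `y` to `1`. -/
def xzHeisenberg (F : Type*) [Field F] : PresentedGroup (raagRels sqC4) →* HeisenbergGroup F :=
  RAAG.lift ![1, ⟨1, 0, 0⟩, 1, ⟨0, 1, 0⟩] (by
    intro u v h
    fin_cases u <;> fin_cases v <;> simp_all [sqC4])

/-- The centre is killed by every homomorphism to the additive group of a field in which `N` is
invertible. -/
theorem map_center {N : ℤ} {F : Type*} [Field F] (hN : (N : F) ≠ 0)
    (φ : powSubgroup N →* Multiplicative F) {h : powSubgroup N}
    (hh : h ∈ Subgroup.center (powSubgroup N)) : φ h = 1 := by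
  have hcomm (k : powSubgroup N) : Commute (k : PresentedGroup (raagRels sqC4)) h :=
    congrArg Subtype.val (Subgroup.mem_center_iff.mp hh k)
  have hwy : (wyHeisenberg F h).y = 0 := by
    have := ((hcomm (wGen N)).map (wyHeisenberg F)).heisenberg_x_mul_y
    simpa [wyHeisenberg, wGen, hN] using this
  have hwx : (wyHeisenberg F h).x = 0 := by
    have := ((hcomm (gGen N)).map (wyHeisenberg F)).heisenberg_x_mul_y
    simpa [wyHeisenberg, gGen, hN] using this
  have hxx : (xzHeisenberg F h).x = 0 := by
    have := ((hcomm (gGen N)).map (xzHeisenberg F)).heisenberg_x_mul_y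
    simpa [xzHeisenberg, gGen, hN] using this
  obtain ⟨⟨i, j, k⟩, rfl⟩ := (homEquiv hN).symm.surjective φ
  let scale (c : F) : Multiplicative F →* Multiplicative F :=
    AddMonoidHom.toMultiplicative (AddMonoidHom.mulLeft (c / N))
  have key : (homEquiv hN).symm (i, j, k) =
      ((scale i).comp (HeisenbergGroup.xHom.comp (wyHeisenberg F)) *
        (scale j).comp (HeisenbergGroup.xHom.comp (xzHeisenberg F)) *
        (scale k).comp (HeisenbergGroup.yHom.comp (wyHeisenberg F))).comp
          (powSubgroup N).subtype := by
    apply hom_ext <;> apply Multiplicative.toAdd.injective <;>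
      simp [homEquiv, scale, wGen, xGen, gGen, wyHeisenberg, xzHeisenberg,
        HeisenbergGroup.xHom, HeisenbergGroup.yHom] <;>
      exact mul_comm _ _
  rw [key]
  apply Multiplicative.toAdd.injective
  simp [scale, HeisenbergGroup.xHom, HeisenbergGroup.yHom, hwx, hwy, hxx]

/-- A right-angled Artin group isomorphic to the subgroup has exactly three vertices, none of which
is adjacent to all the others. -/
theorem card_eq_three_and_not_central {N : ℤ} (hN : N ≠ 0) {W : Type*} [Fintype W]
    {Δ : SimpleGraph W} (e : powSubgroup N ≃* PresentedGroup (raagRels Δ)) :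
    Fintype.card W = 3 ∧ ∀ v, ¬ ∀ u, u ≠ v → Δ.Adj u v := by
  obtain ⟨p, hp, hprime⟩ := Nat.exists_infinite_primes (N.natAbs + 1)
  have := Fact.mk hprime
  have hNp : (N : ZMod p) ≠ 0 := by
    rw [Ne, ZMod.intCast_zmod_eq_zero_iff_dvd, ← Int.natAbs_dvd_natAbs, Int.natAbs_natCast]
    intro h
    have := Nat.le_of_dvd (Int.natAbs_pos.mpr hN) h
    omega
  constructor
  · have E : (W → Multiplicative (ZMod p)) ≃ ZMod p × ZMod p × ZMod p :=
      (RAAG.homEquiv Δ).symm.trans ((e.monoidHomCongrLeftEquiv).symm.trans (homEquiv hNp))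
    have hcard := Nat.card_congr E
    simp only [Nat.card_fun, Nat.card_eq_fintype_card,
      Fintype.card_prod, Fintype.card_multiplicative, ZMod.card] at hcard
    apply Nat.pow_right_injective hprime.two_le
    simp only [hcard]
    ring
  · intro v hv
    have hc : e.symm (of v) ∈ Subgroup.center (powSubgroup N) := by
      rw [Subgroup.mem_center_iff]
      intro k
      apply e.injective
      simpa using Subgroup.mem_center_iff.mp (RAAG.of_mem_center hv) (e k)
    have := map_center hNp (((RAAG.homEquiv Δ).symm
      fun _ => Multiplicative.ofAdd (1 : ZMod p)).comp e.toMonoidHom) hc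
    simp [RAAG.homEquiv] at this

/-- A right-angled Artin group on three vertices with at most one edge admits more homomorphisms
to the symmetric group on three letters than the subgroup. -/
theorem isEmpty_mulEquiv_of_isolated (N : ℤ) {W : Type*} {Δ : SimpleGraph W} {p q r : W}
    (hpq : p ≠ q) (hpr : p ≠ r) (hqr : q ≠ r) (huniv : ∀ u, u = p ∨ u = q ∨ u = r)
    (h₁ : ¬ Δ.Adj p r) (h₂ : ¬ Δ.Adj q r) :
    IsEmpty (powSubgroup N ≃* PresentedGroup (raagRels Δ)) := by
  classical
  refine ⟨fun e => ?_⟩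
  let S := Equiv.Perm (Fin 3)
  let f (s : S × S × S) (u : W) : S := if u = p then s.1 else if u = q then s.2.1 else s.2.2
  have hf (s : {s : S × S × S // s.1 * s.2.1 = s.2.1 * s.1}) (u v : W) (huv : Δ.Adj u v) :
      Commute (f s u) (f s v) := by
    have hs : Commute s.1.1 s.1.2.1 := s.2
    have h₁' := mt Δ.adj_symm h₁
    have h₂' := mt Δ.adj_symm h₂
    rcases huniv u with rfl | rfl | rfl <;> rcases huniv v with rfl | rfl | rfl <;>
      first
      | exact Commute.refl _
      | contradiction
      | simpa [f, hpq, hpq.symm] using hs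
      | simpa [f, hpq, hpq.symm] using hs.symm
  let χ (s : {s : S × S × S // s.1 * s.2.1 = s.2.1 * s.1}) : powSubgroup N →* S :=
    (RAAG.lift (f s) (hf s)).comp e.toMonoidHom
  let Φ (s : {s : S × S × S // s.1 * s.2.1 = s.2.1 * s.1}) :
      {s : S × S × S // s.1 * s.2.1 = s.2.1 * s.1 ∧
        s.1 * (s.2.2 * s.2.1 * s.2.2⁻¹) = s.2.2 * s.2.1 * s.2.2⁻¹ * s.1} :=
    ⟨(χ s (wGen N), χ s (xGen N), χ s (gGen N)), ((commute_wGen_xGen N).map (χ s)).eq, by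
      simpa using ((commute_wGen_conj_xGen N).map (χ s)).eq⟩
  have hΦ : Function.Injective Φ := by
    intro s t hst
    have hst' := congrArg Subtype.val hst
    simp only [Φ, Prod.mk.injEq] at hst'
    have hχ : χ s = χ t := hom_ext hst'.1 hst'.2.1 hst'.2.2
    have hval (u : W) : f s u = f t u := by
      simpa [χ] using DFunLike.congr_fun hχ (e.symm (of u))
    have hp := hval p
    have hq := hval q
    have hr := hval r
    simp only [f, hpq.symm, hpr.symm, hqr.symm, if_true, if_false] at hp hq hr
    exact Subtype.ext (Prod.ext hp (Prod.ext hq hr))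
  have hle := Fintype.card_le_of_injective Φ hΦ
  revert hle
  decide +kernel

end SquareSubgroup

/-- For `g = y·z` and any nonzero `N`, the subgroup of `A(C₄)` generated by
`w^N, x^N, g^N` is not abstractly isomorphic to any right-angled Artin group. -/
theorem subgroup_not_raag (N : ℤ) (hN : N ≠ 0)
    {W : Type*} [Fintype W] (Δ : SimpleGraph W) :
    ¬ Nonempty (↥(Subgroup.closure
      {PresentedGroup.of (rels := raagRels sqC4) 0 ^ N,
       PresentedGroup.of (rels := raagRels sqC4) 1 ^ N,
       (PresentedGroup.of (rels := raagRels sqC4) 2 * PresentedGroup.of 3) ^ N})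
      ≃* PresentedGroup (raagRels Δ)) := by
  rintro ⟨e⟩
  obtain ⟨hcard, hcentral⟩ := SquareSubgroup.card_eq_three_and_not_central hN e
  classical
  obtain ⟨p, q, r, hpq, hpr, hqr, huniv⟩ := Finset.card_eq_three.mp
    ((Finset.card_univ (α := W)).trans hcard)
  have hmem (u : W) : u = p ∨ u = q ∨ u = r := by
    simpa [huniv] using Finset.mem_univ u
  have hiso : (¬ Δ.Adj p r ∧ ¬ Δ.Adj q r) ∨ (¬ Δ.Adj p q ∧ ¬ Δ.Adj r q) ∨
      (¬ Δ.Adj q p ∧ ¬ Δ.Adj r p) := by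
    have hp (h : Δ.Adj q p ∧ Δ.Adj r p) : False :=
      hcentral p fun u hu => by rcases hmem u with rfl | rfl | rfl <;> simp_all
    have hq (h : Δ.Adj p q ∧ Δ.Adj r q) : False :=
      hcentral q fun u hu => by rcases hmem u with rfl | rfl | rfl <;> simp_all
    have hr (h : Δ.Adj p r ∧ Δ.Adj q r) : False :=
      hcentral r fun u hu => by rcases hmem u with rfl | rfl | rfl <;> simp_all
    rw [Δ.adj_comm q p, Δ.adj_comm r p] at *
    rw [Δ.adj_comm r q] at *
    tauto
  rcases hiso with ⟨h₁, h₂⟩ | ⟨h₁, h₂⟩ | ⟨h₁, h₂⟩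
  · exact (SquareSubgroup.isEmpty_mulEquiv_of_isolated N hpq hpr hqr hmem h₁ h₂).false e
  · exact (SquareSubgroup.isEmpty_mulEquiv_of_isolated N hpr hpq hqr.symm
      (fun u => by have := hmem u; tauto) h₁ h₂).false e
  · exact (SquareSubgroup.isEmpty_mulEquiv_of_isolated N hqr hpq.symm hpr.symm
      (fun u => by have := hmem u; tauto) h₁ h₂).false e
end

section
/- Let Γ be a finite simple graph with vertex set V, let v ∈ V, and let k be a nonzero integer. The group endomorphism of A(Γ) determined by sending the vertex generator v to v^k and fixing every other vertex generator is well-defined and injective; consequently, the subgroup of A(Γ) generated by v^k together with the vertex generators corresponding to V ∖ {v} is isomorphic to A(Γ). -/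
namespace HNNExtension

section Expand

variable {G : Type*} [Group G]

/-- Replace each syllable `t ^ u * g` of a word by `t ^ (s * u * (n + 1)) * g`, written out
letter by letter. -/
def expandWord (s : ℤˣ) (n : ℕ) (l : List (ℤˣ × G)) : List (ℤˣ × G) :=
  l.flatMap fun x => List.replicate n (s * x.1, 1) ++ [(s * x.1, x.2)]

theorem fst_of_mem_head?_replicate_append (n : ℕ) (u : ℤˣ) (g : G) (l : List (ℤˣ × G)) :
    ∀ y ∈ (List.replicate n (u, 1) ++ (u, g) :: l).head?, y.1 = u := by
  cases n <;> simp +contextual [List.replicate_succ, eq_comm]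

theorem isChain_replicate_append (A : Subgroup G) (n : ℕ) (u : ℤˣ) (g : G)
    {l : List (ℤˣ × G)}
    (h : ((u, g) :: l).IsChain fun a b => a.2 ∈ A → a.1 = b.1) :
    (List.replicate n (u, (1 : G)) ++ (u, g) :: l).IsChain
      fun a b => a.2 ∈ A → a.1 = b.1 := by
  induction n with
  | zero => simpa using h
  | succ n ih =>
    rw [List.replicate_succ, List.cons_append, List.isChain_cons]
    exact ⟨fun y hy _ => (fst_of_mem_head?_replicate_append n u g l y hy).symm, ih⟩

theorem isChain_expandWord (A : Subgroup G) (s : ℤˣ) (n : ℕ) {l : List (ℤˣ × G)}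
    (h : l.IsChain fun a b => a.2 ∈ A → a.1 = b.1) :
    (expandWord s n l).IsChain fun a b => a.2 ∈ A → a.1 = b.1 := by
  induction l with
  | nil => simp [expandWord]
  | cons x l ih =>
    obtain ⟨hx, hl⟩ := List.isChain_cons.1 h
    simp only [expandWord, List.flatMap_cons, List.append_assoc, List.singleton_append]
    refine isChain_replicate_append A n _ _ (List.isChain_cons.2 ⟨fun y hy hmem => ?_, ih hl⟩)
    cases l with
    | nil => simp at hy
    | cons z l =>
      simp only [List.flatMap_cons, List.append_assoc, List.singleton_append] at hy
      rw [fst_of_mem_head?_replicate_append n _ _ _ y hy, hx z rfl hmem]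

end Expand

variable {G : Type*} [Group G] (A : Subgroup G)

/-- The endomorphism of an HNN extension with trivial conjugation that raises the stable letter
to a power and fixes the base group. -/
def powStableLetter (k : ℤ) :
    HNNExtension G A A (MulEquiv.refl A) →* HNNExtension G A A (MulEquiv.refl A) :=
  lift of (t ^ k) fun a => (Commute.zpow_left (t_mul_of (φ := MulEquiv.refl A) a) k).eq

@[simp]
theorem powStableLetter_t (k : ℤ) : powStableLetter A k t = t ^ k :=
  lift_t _ _ _

@[simp]
theorem powStableLetter_of (k : ℤ) (g : G) : powStableLetter A k (of g) = of g :=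
  lift_of _ _ _ g

theorem prod_expandWord (s : ℤˣ) (n : ℕ) (l : List (ℤˣ × G)) :
    ((expandWord s n l).map fun x =>
        (t ^ (x.1 : ℤ) * of x.2 : HNNExtension G A A (MulEquiv.refl A))).prod =
      powStableLetter A (s * (n + 1))
        (l.map fun x => (t ^ (x.1 : ℤ) * of x.2)).prod := by
  induction l with
  | nil => simp [expandWord]
  | cons x l ih =>
    have hpow : (t ^ ((s : ℤ) * x.1)) ^ n * t ^ ((s : ℤ) * x.1) =
        ((t : HNNExtension G A A (MulEquiv.refl A)) ^ ((s : ℤ) * (n + 1))) ^ (x.1 : ℤ) := by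
      rw [← pow_succ, ← zpow_natCast, ← zpow_mul, ← zpow_mul]
      congr 1
      push_cast
      ring
    simp only [expandWord] at ih
    simp [expandWord, ih, ← hpow, mul_assoc]

theorem powStableLetter_injective {k : ℤ} (hk : k ≠ 0) :
    Function.Injective (powStableLetter A k) := by
  obtain ⟨s, n, rfl⟩ : ∃ (s : ℤˣ) (n : ℕ), k = s * (n + 1) := by
    obtain ⟨n, hn⟩ := Nat.exists_eq_succ_of_ne_zero (Int.natAbs_ne_zero.2 hk)
    rcases Int.natAbs_eq k with h | h
    · exact ⟨1, n, by simp; omega⟩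
    · exact ⟨-1, n, by simp; omega⟩
  rw [injective_iff_map_eq_one]
  intro x hx
  obtain ⟨d⟩ := NormalWord.TransversalPair.nonempty G A A
  obtain ⟨w, rfl⟩ := (NormalWord.equiv (MulEquiv.refl A) d).symm.surjective x
  change powStableLetter A _ (w.prod (MulEquiv.refl A)) = 1 at hx
  change w.prod (MulEquiv.refl A) = 1
  have hsub (u : ℤˣ) : toSubgroup A A u = A := by simp [toSubgroup]
  let w' : NormalWord.ReducedWord G A A :=
    { head := w.head
      toList := expandWord s n w.toList
      chain := by
        have := w.chain
        simp only [hsub] at this ⊢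
        exact isChain_expandWord A s n this }
  have hw' : w'.prod (MulEquiv.refl A) = 1 := by
    rw [← hx]
    simp only [NormalWord.ReducedWord.prod, w', prod_expandWord, map_mul]
    simp
  have hnil : expandWord s n w.toList = [] :=
    ReducedWord.toList_eq_nil_of_mem_of_range (MulEquiv.refl A) w' (hw' ▸ one_mem _)
  have hl : w.toList = [] := by
    cases h : w.toList with
    | nil => rfl
    | cons x l => simp [expandWord, h] at hnil
  rw [← hx]
  simp [NormalWord.ReducedWord.prod, hl]

end HNNExtension

section RAAG

variable {V : Type*} {Γ : SimpleGraph V}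

theorem raag_of_commute {u v : V} (h : Γ.Adj u v) :
    Commute (PresentedGroup.of (rels := raagRels Γ) u) (PresentedGroup.of v) := by
  have := PresentedGroup.one_of_mem (rels := raagRels Γ) ⟨u, v, h, rfl⟩
  simp only [map_mul, map_inv] at this
  rw [mul_inv_eq_one, mul_inv_eq_iff_eq_mul] at this
  exact this

/-- A map on vertices sending adjacent vertices to commuting elements extends to the
right-angled Artin group. -/
def raagLift {H : Type*} [Group H] (f : V → H) (hf : ∀ u v, Γ.Adj u v → Commute (f u) (f v)) :
    PresentedGroup (raagRels Γ) →* H :=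
  PresentedGroup.toGroup (f := f) (by
    rintro _ ⟨u, v, h, rfl⟩
    simp [(hf u v h).eq])

@[simp]
theorem raagLift_of {H : Type*} [Group H] (f : V → H)
    (hf : ∀ u v, Γ.Adj u v → Commute (f u) (f v)) (v : V) :
    raagLift f hf (PresentedGroup.of v) = f v :=
  PresentedGroup.toGroup.of _

variable (Γ) (v : V)

/-- The right-angled Artin group on the complement of a vertex. -/
abbrev RaagDelete : Type _ := PresentedGroup (raagRels (Γ.induce {w | w ≠ v}))

/-- The subgroup generated by the link of a vertex, in the group on its complement. -/
def raagLink : Subgroup (RaagDelete Γ v) :=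
  Subgroup.closure (PresentedGroup.of '' {w | Γ.Adj v w})

/-- The right-angled Artin group as an HNN extension with stable letter `v`. -/
abbrev RaagHNN : Type _ :=
  HNNExtension (RaagDelete Γ v) (raagLink Γ v) (raagLink Γ v) (MulEquiv.refl _)

theorem commute_t_of_link {w : {w | w ≠ v}} (h : Γ.Adj v w) :
    Commute (HNNExtension.t : RaagHNN Γ v) (HNNExtension.of (PresentedGroup.of w)) :=
  HNNExtension.t_mul_of (φ := MulEquiv.refl (raagLink Γ v))
    ⟨_, Subgroup.subset_closure ⟨w, h, rfl⟩⟩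

open Classical in
/-- The splitting of a right-angled Artin group over the link of a vertex. -/
noncomputable def raagToHNN : PresentedGroup (raagRels Γ) →* RaagHNN Γ v :=
  raagLift
    (fun w => if h : w = v then HNNExtension.t else HNNExtension.of (PresentedGroup.of ⟨w, h⟩))
    (by
      intro a b hab
      by_cases ha : a = v <;> by_cases hb : b = v
      · exact absurd (ha.trans hb.symm) hab.ne
      · subst ha
        simpa [hb] using commute_t_of_link Γ a (w := ⟨b, hb⟩) hab
      · subst hb
        simpa [ha] using (commute_t_of_link Γ b (w := ⟨a, ha⟩) hab.symm).symm
      · simp only [ha, hb, dite_false]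
        exact (raag_of_commute (Γ := Γ.induce {w | w ≠ v}) (u := ⟨a, ha⟩) (v := ⟨b, hb⟩)
          hab).map HNNExtension.of)

@[simp]
theorem raagToHNN_of_self : raagToHNN Γ v (PresentedGroup.of v) = HNNExtension.t := by
  simp [raagToHNN]

theorem raagToHNN_of_ne {w : V} (h : w ≠ v) :
    raagToHNN Γ v (PresentedGroup.of w) = HNNExtension.of (PresentedGroup.of ⟨w, h⟩) := by
  simp [raagToHNN, h]

/-- The inclusion of the group on the complement of a vertex. -/
def raagDeleteIncl : RaagDelete Γ v →* PresentedGroup (raagRels Γ) :=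
  raagLift (fun w => PresentedGroup.of w.1) fun _ _ h => raag_of_commute h

theorem commute_of_raagLink {x : RaagDelete Γ v} (hx : x ∈ raagLink Γ v) :
    Commute (PresentedGroup.of v) (raagDeleteIncl Γ v x) := by
  induction hx using Subgroup.closure_induction with
  | mem x hx =>
    obtain ⟨w, hw, rfl⟩ := hx
    simpa [raagDeleteIncl] using raag_of_commute hw
  | one => simp
  | mul x y _ _ hx hy => simpa using hx.mul_right hy
  | inv x _ hx => simpa using hx.inv_right

theorem raagToHNN_injective : Function.Injective (raagToHNN Γ v) := by
  let r : RaagHNN Γ v →* PresentedGroup (raagRels Γ) :=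
    HNNExtension.lift (raagDeleteIncl Γ v) (PresentedGroup.of v)
      fun a => (commute_of_raagLink Γ v a.2).eq
  have hr : r.comp (raagToHNN Γ v) = MonoidHom.id _ := by
    refine PresentedGroup.ext fun w => ?_
    by_cases h : w = v
    · subst h
      simpa [r] using HNNExtension.lift_t _ _ _
    · simp [r, raagToHNN_of_ne Γ v h, raagDeleteIncl]
  exact Function.LeftInverse.injective (g := r) fun x => DFunLike.congr_fun hr x

open Classical in
/-- The endomorphism raising the vertex generator `v` to the power `k`. -/
noncomputable def raagPow (k : ℤ) : PresentedGroup (raagRels Γ) →* PresentedGroup (raagRels Γ) :=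
  raagLift (fun w => if w = v then PresentedGroup.of w ^ k else PresentedGroup.of w) (by
    intro a b hab
    have h := raag_of_commute hab
    split_ifs
    exacts [h.zpow_zpow k k, h.zpow_left k, h.zpow_right k, h])

theorem raagPow_of_self (k : ℤ) :
    raagPow Γ v k (PresentedGroup.of v) = PresentedGroup.of v ^ k := by
  simp [raagPow]

theorem raagPow_of_ne (k : ℤ) {w : V} (h : w ≠ v) :
    raagPow Γ v k (PresentedGroup.of w) = PresentedGroup.of w := by
  simp [raagPow, h]

theorem raagPow_injective {k : ℤ} (hk : k ≠ 0) : Function.Injective (raagPow Γ v k) := by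
  have hcomm : (raagToHNN Γ v).comp (raagPow Γ v k) =
      (HNNExtension.powStableLetter (raagLink Γ v) k).comp (raagToHNN Γ v) := by
    refine PresentedGroup.ext fun w => ?_
    by_cases h : w = v
    · subst h
      simp [raagPow_of_self]
    · simp [raagPow_of_ne Γ v k h, raagToHNN_of_ne Γ v h]
  refine Function.Injective.of_comp (f := raagToHNN Γ v) ?_
  rw [← MonoidHom.coe_comp, hcomm, MonoidHom.coe_comp]
  exact (HNNExtension.powStableLetter_injective _ hk).comp (raagToHNN_injective Γ v)

theorem range_raagPow (k : ℤ) :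
    (raagPow Γ v k).range = Subgroup.closure
      ({(PresentedGroup.of (rels := raagRels Γ) v) ^ k} ∪
        (fun w => PresentedGroup.of (rels := raagRels Γ) w) '' {w | w ≠ v}) := by
  rw [MonoidHom.range_eq_map, ← PresentedGroup.closure_range_of, MonoidHom.map_closure]
  congr 1
  ext x
  constructor
  · rintro ⟨_, ⟨w, rfl⟩, rfl⟩
    by_cases h : w = v
    · subst h
      exact Or.inl (raagPow_of_self Γ w k)
    · exact Or.inr ⟨w, h, (raagPow_of_ne Γ v k h).symm⟩
  · rintro (rfl | ⟨w, h, rfl⟩)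
    · exact ⟨_, ⟨v, rfl⟩, raagPow_of_self Γ v k⟩
    · exact ⟨_, ⟨w, rfl⟩, raagPow_of_ne Γ v k h⟩

end RAAG

/-- The endomorphism of `A(Γ)` sending the vertex generator `v` to `v^k` (with
`k ≠ 0`) and fixing every other vertex generator is well-defined and injective;
consequently, the subgroup generated by `v^k` and the other vertex generators is
isomorphic to `A(Γ)`. -/
theorem raag_power_of_generator {V : Type*} [Fintype V] (Γ : SimpleGraph V)
    (v : V) (k : ℤ) (hk : k ≠ 0) :
    ∃ φ : PresentedGroup (raagRels Γ) →* PresentedGroup (raagRels Γ),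
      φ (PresentedGroup.of v) = (PresentedGroup.of (rels := raagRels Γ) v) ^ k ∧
      (∀ w : V, w ≠ v → φ (PresentedGroup.of w) = PresentedGroup.of w) ∧
      Function.Injective φ ∧
      Nonempty (↥(Subgroup.closure
        ({(PresentedGroup.of (rels := raagRels Γ) v) ^ k} ∪
          (fun w => PresentedGroup.of (rels := raagRels Γ) w) '' {w | w ≠ v}))
        ≃* PresentedGroup (raagRels Γ)) := by
  exact ⟨raagPow Γ v k, raagPow_of_self Γ v k, fun _ h => raagPow_of_ne Γ v k h,
    raagPow_injective Γ v hk, range_raagPow Γ v k ▸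
      ⟨(MonoidHom.ofInjective (raagPow_injective Γ v hk)).symm⟩⟩
end

section
/- Unsolvability of the isomorphism problem for finitely generated subgroups of F₂ × F₂: there is no computable function f : List (Word × Word) → List (Word × Word) → Bool such that for all lists S and T, f S T = true if and only if the subgroup of F₂ × F₂ generated by the elements represented by S is isomorphic to the subgroup generated by the elements represented by T. -/
/-- A word in the free group `F₂ = FreeGroup Bool`. -/
abbrev Word2 : Type := List (Bool × Bool)

/-- The subgroup of `F₂ × F₂` generated by the pairs of elements represented by a
list of pairs of words. -/
def pairsSubgroup (S : List (Word2 × Word2)) :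
    Subgroup (FreeGroup Bool × FreeGroup Bool) :=
  Subgroup.closure {p | ∃ q ∈ S, p = (FreeGroup.mk q.1, FreeGroup.mk q.2)}

namespace FreeGroup

variable {α : Type*}

theorem eq_of_commute_of {x y : α} (h : Commute (of x) (of y)) : x = y := by
  classical
  by_contra hne
  let f : FreeGroup α →* Equiv.Perm (Fin 3) :=
    lift fun z => if z = x then Equiv.swap 0 1 else Equiv.swap 1 2
  have := h.map f
  simp only [f, lift_apply_of, if_true, if_neg (Ne.symm hne)] at this
  exact absurd this.eq (by decide)

theorem exists_zpowers_of_subsingleton [Subsingleton α] :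
    ∃ h : FreeGroup α, ∀ g, g ∈ Subgroup.zpowers h := by
  rcases isEmpty_or_nonempty α with _ | ⟨⟨x⟩⟩
  · exact ⟨1, fun g => by simp [Subsingleton.elim g 1]⟩
  · refine ⟨of x, fun g => ?_⟩
    have : Set.range (of : α → FreeGroup α) = {of x} := by
      ext z
      constructor
      · rintro ⟨y, rfl⟩
        simp [Subsingleton.elim y x]
      · rintro rfl
        exact ⟨x, rfl⟩
    rw [Subgroup.zpowers_eq_closure, ← this, closure_range_of]
    trivial

/-- Commuting elements of a free group are powers of a common element. -/
theorem exists_zpow_of_commute {a b : FreeGroup α} (h : Commute a b) :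
    ∃ (c : FreeGroup α) (m n : ℤ), a = c ^ m ∧ b = c ^ n := by
  let H : Subgroup (FreeGroup α) := Subgroup.closure {a, b}
  have hcomm : ∀ x ∈ H, ∀ y ∈ H, x * y = y * x := by
    intro x hx y hy
    have := Subgroup.isMulCommutative_closure (k := ({a, b} : Set (FreeGroup α))) (by
      rintro x (rfl | rfl) y (rfl | rfl) <;> first | rfl | exact h.eq | exact h.eq.symm)
    have := this.is_comm.comm ⟨x, hx⟩ ⟨y, hy⟩
    exact congrArg Subtype.val this
  let e := IsFreeGroup.toFreeGroup H
  have : Subsingleton (IsFreeGroup.Generators H) := by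
    refine ⟨fun x y => eq_of_commute_of ?_⟩
    have key : Commute (e.symm (of x)) (e.symm (of y)) :=
      Subtype.ext (hcomm _ (e.symm (of x)).2 _ (e.symm (of y)).2)
    simpa using key.map e
  obtain ⟨c, hc⟩ := exists_zpowers_of_subsingleton (α := IsFreeGroup.Generators H)
  have hz : ∀ x (hx : x ∈ H), ∃ m : ℤ, x = ((e.symm c : H) : FreeGroup α) ^ m := by
    intro x hx
    obtain ⟨m, hm⟩ := hc (e ⟨x, hx⟩)
    refine ⟨m, ?_⟩
    have := congrArg (fun z => ((e.symm z : H) : FreeGroup α)) hm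
    simpa using this.symm
  obtain ⟨m, hm⟩ := hz a (Subgroup.subset_closure (by simp))
  obtain ⟨n, hn⟩ := hz b (Subgroup.subset_closure (by simp))
  exact ⟨_, m, n, hm, hn⟩

/-- The exponent sum of a letter. -/
noncomputable def exponentSum (x : α) : FreeGroup α →* Multiplicative ℤ :=
  open Classical in lift (Pi.mulSingle x (Multiplicative.ofAdd 1))

theorem exists_eq_of_zpow_of_commute {x : α} {z : FreeGroup α} (h : Commute z (of x)) :
    ∃ m : ℤ, z = of x ^ m := by
  obtain ⟨c, m, n, rfl, hn⟩ := exists_zpow_of_commute h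
  have := congrArg (exponentSum x) hn
  simp only [exponentSum, lift_apply_of, Pi.mulSingle_eq_same, map_zpow] at this
  have h1 := congrArg Multiplicative.toAdd this
  simp only [toAdd_ofAdd, toAdd_zpow, smul_eq_mul] at h1
  rcases Int.eq_one_or_neg_one_of_mul_eq_one h1.symm with rfl | rfl
  · exact ⟨m, by rw [hn, zpow_one]⟩
  · exact ⟨-m, by rw [hn]; simp⟩

theorem eq_one_of_commute_of_commute {x y : α} (hxy : x ≠ y) {z : FreeGroup α}
    (hx : Commute z (of x)) (hy : Commute z (of y)) : z = 1 := by
  classical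
  obtain ⟨m, hm⟩ := exists_eq_of_zpow_of_commute hx
  obtain ⟨n, hn⟩ := exists_eq_of_zpow_of_commute hy
  have := congrArg (exponentSum x) (hm.symm.trans hn)
  simp only [exponentSum, map_zpow, lift_apply_of, Pi.mulSingle_eq_same,
    Pi.mulSingle_eq_of_ne hxy.symm, one_zpow] at this
  have h1 := congrArg Multiplicative.toAdd this
  simp at h1
  rw [hm, h1, zpow_zero]

/-- Free groups are commutative-transitive. -/
theorem commute_trans_of_ne_one {g a b : FreeGroup α} (hg : g ≠ 1) (ha : Commute g a)
    (hb : Commute g b) : Commute a b := by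
  let H : Subgroup (FreeGroup α) := Subgroup.centralizer {g}
  let e := IsFreeGroup.toFreeGroup H
  have hgH : g ∈ H := Subgroup.mem_centralizer_singleton_iff.2 rfl
  have haH : a ∈ H := Subgroup.mem_centralizer_singleton_iff.2 (by exact ha.eq.symm)
  have hbH : b ∈ H := Subgroup.mem_centralizer_singleton_iff.2 (by exact hb.eq.symm)
  have : Subsingleton (IsFreeGroup.Generators H) := by
    refine ⟨fun x y => ?_⟩
    by_contra hxy
    have hc : ∀ x, Commute (e ⟨g, hgH⟩) (of x) := by
      intro x
      have key : Commute (⟨g, hgH⟩ : H) (e.symm (of x)) := Subtype.ext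
        (Subgroup.mem_centralizer_singleton_iff.1 (e.symm (of x)).2).symm
      simpa using key.map e
    have := eq_one_of_commute_of_commute hxy (hc x) (hc y)
    rw [map_eq_one_iff e e.injective] at this
    exact hg (congrArg Subtype.val this)
  obtain ⟨c, hc⟩ := exists_zpowers_of_subsingleton (α := IsFreeGroup.Generators H)
  have hab : Commute (e ⟨a, haH⟩) (e ⟨b, hbH⟩) := by
    obtain ⟨m, hm⟩ := hc (e ⟨a, haH⟩)
    obtain ⟨n, hn⟩ := hc (e ⟨b, hbH⟩)
    rw [← hm, ← hn]
    exact (Commute.refl c).zpow_zpow m n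
  have := hab.map e.symm
  exact (by simpa using congrArg Subtype.val this.eq : a * b = b * a)

/-- The homomorphism to `FreeGroup Bool` sending the `i`-th letter to the conjugate of the letter
`true` by the `i`-th power of the letter `false`. -/
def toRankTwo : FreeGroup ℕ →* FreeGroup Bool :=
  lift fun i => of false ^ i * of true * (of false ^ i)⁻¹

theorem toRankTwo_injective : Function.Injective toRankTwo := by
  let φ : Multiplicative ℤ →* MulAut (FreeGroup ℤ) :=
    zpowersHom _ (freeGroupCongr (Equiv.addRight (1 : ℤ)))
  let f : FreeGroup Bool →* FreeGroup ℤ ⋊[φ] Multiplicative ℤ :=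
    lift fun b => if b then SemidirectProduct.inl (of 0)
      else SemidirectProduct.inr (Multiplicative.ofAdd 1)
  have hpow : ∀ i : ℕ, φ (Multiplicative.ofAdd 1 ^ i) (of 0) = of (i : ℤ) := by
    intro i
    induction i with
    | zero => simp
    | succ i ih =>
      rw [pow_succ', _root_.map_mul, MulAut.mul_apply, ih]
      simp [φ]
  have hf : f.comp toRankTwo = SemidirectProduct.inl.comp (map (Nat.cast : ℕ → ℤ)) := by
    ext1 i
    simp only [MonoidHom.comp_apply, toRankTwo, lift_apply_of, _root_.map_mul, _root_.map_pow,
      _root_.map_inv, f, map.of]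
    simp only [if_true, Bool.false_eq_true, if_false]
    rw [← hpow, SemidirectProduct.inl_aut, _root_.map_pow]
    simp
  have hinj : Function.Injective (f.comp toRankTwo) := by
    rw [hf]
    exact SemidirectProduct.inl_injective.comp (map_injective Nat.cast_injective)
  exact Function.Injective.of_comp (f := f) hinj

end FreeGroup

/-- The subgroup generated by the elements whose centralizer is not commutative. -/
def Subgroup.nonabelianCentralizerClosure (G : Type*) [Group G] : Subgroup G :=
  Subgroup.closure {g | ∃ a b, Commute g a ∧ Commute g b ∧ ¬ Commute a b}

theorem MulEquiv.mem_nonabelianCentralizerClosure {G H : Type*} [Group G] [Group H] (e : G ≃* H)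
    {g : G} (hg : g ∈ Subgroup.nonabelianCentralizerClosure G) :
    e g ∈ Subgroup.nonabelianCentralizerClosure H := by
  suffices Subgroup.nonabelianCentralizerClosure G ≤
      (Subgroup.nonabelianCentralizerClosure H).comap e.toMonoidHom from this hg
  refine (Subgroup.closure_le _).2 ?_
  rintro g ⟨a, b, ha, hb, hab⟩
  refine Subgroup.subset_closure ⟨e a, e b, ha.map e, hb.map e, fun h => hab ?_⟩
  simpa using h.map e.symm

section FiberSquare

variable {G P : Type*} [Group G] [Group P]

/-- The image in `P × P` of the fibre product of two copies of `G → G ⧸ N`. -/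
def fiberSquare (i : G →* P) (N : Subgroup G) [N.Normal] : Subgroup (P × P) :=
  (MonoidHom.eqLocus ((QuotientGroup.mk' N).comp (MonoidHom.fst G G))
    ((QuotientGroup.mk' N).comp (MonoidHom.snd G G))).map (i.prodMap i)

theorem mem_fiberSquare {i : G →* P} {N : Subgroup G} [N.Normal] {p : P × P} :
    p ∈ fiberSquare i N ↔ ∃ u v : G, (u : G ⧸ N) = v ∧ i u = p.1 ∧ i v = p.2 := by
  constructor
  · rintro ⟨⟨u, v⟩, huv, rfl⟩
    exact ⟨u, v, huv, rfl, rfl⟩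
  · rintro ⟨u, v, huv, h1, h2⟩
    exact ⟨(u, v), huv, Prod.ext h1 h2⟩

theorem closure_eq_fiberSquare (i : G →* P) {A R : Set G} (hA : Subgroup.closure A = ⊤) :
    Subgroup.closure ((fun a => (i a, i a)) '' A ∪ (fun r => (i r, 1)) '' R) =
      fiberSquare i (Subgroup.normalClosure R) := by
  set M := Subgroup.closure ((fun a => (i a, i a)) '' A ∪ (fun r => (i r, (1 : P))) '' R) with hM
  have hdiag : ∀ g, (i g, i g) ∈ M := by
    intro g
    have : Subgroup.closure A ≤ M.comap (i.prod i) :=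
      (Subgroup.closure_le _).2 fun a ha => Subgroup.subset_closure (Or.inl ⟨a, ha, rfl⟩)
    exact this (hA ▸ Subgroup.mem_top g)
  have hN : ∀ n ∈ Subgroup.normalClosure R, (i n, (1 : P)) ∈ M := by
    let K : Subgroup G := M.comap (i.prod 1)
    have hK : K.Normal := ⟨fun n hn g => by
      have := M.mul_mem (M.mul_mem (hdiag g) hn) (M.inv_mem (hdiag g))
      simpa [K, Subgroup.mem_comap] using this⟩
    intro n hn
    exact (Subgroup.normalClosure_le_normal (N := K) fun r hr =>
      Subgroup.subset_closure (Or.inr ⟨r, hr, rfl⟩)) hn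
  refine le_antisymm ((Subgroup.closure_le _).2 ?_) ?_
  · rintro _ (⟨a, -, rfl⟩ | ⟨r, hr, rfl⟩)
    · exact mem_fiberSquare.2 ⟨a, a, rfl, rfl, rfl⟩
    · refine mem_fiberSquare.2 ⟨r, 1, ?_, rfl, map_one i⟩
      rw [QuotientGroup.mk_one, QuotientGroup.eq_one_iff]
      exact Subgroup.subset_normalClosure hr
  · rintro p hp
    obtain ⟨u, v, huv, h1, h2⟩ := mem_fiberSquare.1 hp
    have huv' : u * v⁻¹ ∈ Subgroup.normalClosure R := by
      rw [← QuotientGroup.eq_one_iff, QuotientGroup.mk_mul, QuotientGroup.mk_inv, huv,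
        mul_inv_cancel]
    have := M.mul_mem (hN _ huv') (hdiag v)
    convert this using 1
    ext <;> simp [h1, h2]

variable {β : Type*} {i : G →* FreeGroup β} {N : Subgroup G} [N.Normal]

theorem mem_nonabelianCentralizerClosure_fiberSquare (hi : Function.Injective i)
    (hN : ∃ a ∈ N, ∃ b ∈ N, ¬ Commute a b) (m : fiberSquare i N) :
    m ∈ Subgroup.nonabelianCentralizerClosure (fiberSquare i N) ↔ m.1.1 ∈ N.map i := by
  constructor
  · intro hm
    suffices Subgroup.nonabelianCentralizerClosure (fiberSquare i N) ≤
        (N.map i).comap ((MonoidHom.fst _ _).comp (fiberSquare i N).subtype) from this hm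
    refine (Subgroup.closure_le _).2 ?_
    rintro ⟨⟨x, y⟩, hxy⟩ ⟨⟨⟨a, a'⟩, ha⟩, ⟨⟨b, b'⟩, hb⟩, hga, hgb, hab⟩
    have hga' := congrArg Subtype.val hga.eq
    have hgb' := congrArg Subtype.val hgb.eq
    simp only [Subgroup.coe_mul, Prod.mk_mul_mk, Prod.mk.injEq] at hga' hgb'
    by_cases hx : x = 1
    · exact ⟨1, N.one_mem, by simp [hx]⟩
    by_cases hy : y = 1
    · obtain ⟨u, v, huv, h1, h2⟩ := mem_fiberSquare.1 hxy
      have hv : v = 1 := hi (by rw [h2, map_one]; exact hy)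
      refine ⟨u, ?_, h1⟩
      rw [hv, QuotientGroup.mk_one, QuotientGroup.eq_one_iff] at huv
      exact huv
    · refine absurd (Subtype.ext (Prod.ext ?_ ?_)) hab
      · exact (FreeGroup.commute_trans_of_ne_one hx hga'.1 hgb'.1).eq
      · exact (FreeGroup.commute_trans_of_ne_one hy hga'.2 hgb'.2).eq
  · obtain ⟨a, ha, b, hb, hab⟩ := hN
    have hab' : ¬ Commute (i a) (i b) := fun h => hab (hi (by simpa using h.eq))
    obtain ⟨⟨x, y⟩, hxy⟩ := m
    rintro ⟨u, hu : u ∈ N, hux : i u = x⟩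
    obtain ⟨u', v, huv, h1, h2 : i v = y⟩ := mem_fiberSquare.1 hxy
    obtain rfl : u' = u := hi (h1.trans hux.symm)
    have hv : v ∈ N := by
      rw [← QuotientGroup.eq_one_iff] at hu ⊢
      rw [← huv, hu]
    have left : ∀ n ∈ N, (i n, (1 : FreeGroup β)) ∈ fiberSquare i N := fun n hn =>
      mem_fiberSquare.2 ⟨n, 1, by rwa [QuotientGroup.mk_one, QuotientGroup.eq_one_iff], rfl,
        map_one i⟩
    have right : ∀ n ∈ N, ((1 : FreeGroup β), i n) ∈ fiberSquare i N := fun n hn =>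
      mem_fiberSquare.2 ⟨1, n, by
        rw [QuotientGroup.mk_one, eq_comm, QuotientGroup.eq_one_iff]; exact hn, map_one i, rfl⟩
    have hprod : (⟨(x, y), hxy⟩ : fiberSquare i N) =
        ⟨_, left u' hu⟩ * ⟨_, right v hv⟩ := by
      ext <;> simp [hux, h2]
    rw [hprod]
    refine mul_mem (Subgroup.subset_closure ?_) (Subgroup.subset_closure ?_)
    · refine ⟨⟨_, right a ha⟩, ⟨_, right b hb⟩, ?_, ?_, fun h => hab' ?_⟩
      · exact Subtype.ext (by simp)
      · exact Subtype.ext (by simp)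
      · exact (Prod.ext_iff.1 (congrArg Subtype.val h.eq)).2
    · refine ⟨⟨_, left a ha⟩, ⟨_, left b hb⟩, ?_, ?_, fun h => hab' ?_⟩
      · exact Subtype.ext (by simp)
      · exact Subtype.ext (by simp)
      · exact (Prod.ext_iff.1 (congrArg Subtype.val h.eq)).1

theorem not_nonempty_fiberSquare_mulEquiv {N' : Subgroup G} [N'.Normal]
    (hi : Function.Injective i)
    (hN : ∃ a ∈ N, ∃ b ∈ N, ¬ Commute a b) (hN' : ∃ a ∈ N', ∃ b ∈ N', ¬ Commute a b)
    (htorsion : ∃ d, d ^ 2 ∈ N ∧ d ∉ N) (hfree : ∀ d, d ^ 2 ∈ N' → d ∈ N') :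
    ¬ Nonempty (fiberSquare i N ≃* fiberSquare i N') := by
  rintro ⟨e⟩
  obtain ⟨d, hd2, hd⟩ := htorsion
  let D : fiberSquare i N := ⟨(i d, i d), mem_fiberSquare.2 ⟨d, d, rfl, rfl, rfl⟩⟩
  have hD2 : D ^ 2 ∈ Subgroup.nonabelianCentralizerClosure (fiberSquare i N) :=
    (mem_nonabelianCentralizerClosure_fiberSquare hi hN _).2 ⟨d ^ 2, hd2, by simp [D]⟩
  have hD : D ∉ Subgroup.nonabelianCentralizerClosure (fiberSquare i N) := by
    rw [mem_nonabelianCentralizerClosure_fiberSquare hi hN]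
    rintro ⟨d', hd', h⟩
    exact hd (hi h ▸ hd')
  have h2 := e.mem_nonabelianCentralizerClosure hD2
  rw [map_pow, mem_nonabelianCentralizerClosure_fiberSquare hi hN'] at h2
  obtain ⟨u, v, huv, h1, -⟩ := mem_fiberSquare.1 (e D).2
  obtain ⟨n, hn, hn'⟩ := h2
  have hnu : n = u ^ 2 := hi (by rw [hn', map_pow, h1]; rfl)
  have : e D ∈ Subgroup.nonabelianCentralizerClosure (fiberSquare i N') :=
    (mem_nonabelianCentralizerClosure_fiberSquare hi hN' _).2 ⟨u, hfree u (hnu ▸ hn), h1⟩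
  have := e.symm.mem_nonabelianCentralizerClosure this
  rw [e.symm_apply_apply] at this
  exact hD this

end FiberSquare

theorem Equiv.exists_comp_eq_of_fiber_equiv {J J' C : Type*} {f : J → C} {f' : J' → C}
    (h : ∀ c, Nonempty ({j // f j = c} ≃ {j // f' j = c})) :
    ∃ e : J ≃ J', ∀ j, f' (e j) = f j := by
  have e := fun c => (h c).some
  refine ⟨(Equiv.sigmaFiberEquiv f).symm.trans
    ((Equiv.sigmaCongrRight e).trans (Equiv.sigmaFiberEquiv f')), fun j => ?_⟩
  exact (e (f j) ⟨j, rfl⟩).2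

theorem Equiv.exists_comp_eq_and_apply_eq {J J' C : Type*} {f : J → C} {f' : J' → C}
    (h : ∀ c, Nonempty ({j // f j = c} ≃ {j // f' j = c})) {j₀ j₁ : J} {k₀ k₁ : J'}
    (hj : j₀ ≠ j₁) (hk : k₀ ≠ k₁) (h₀ : f j₀ = f' k₀) (h₁ : f j₁ = f' k₁) :
    ∃ e : J ≃ J', (∀ j, f' (e j) = f j) ∧ e j₀ = k₀ ∧ e j₁ = k₁ := by
  classical
  have swap_color : ∀ a b : J', f' a = f' b → ∀ j, f' (Equiv.swap a b j) = f' j := by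
    intro a b hab j
    rcases eq_or_ne j a with rfl | ha
    · rw [Equiv.swap_apply_left, hab]
    rcases eq_or_ne j b with rfl | hb
    · rw [Equiv.swap_apply_right, hab]
    · rw [Equiv.swap_apply_of_ne_of_ne ha hb]
  obtain ⟨e, he⟩ := Equiv.exists_comp_eq_of_fiber_equiv h
  let e' := e.trans (Equiv.swap (e j₀) k₀)
  have he' : ∀ j, f' (e' j) = f j := fun j => by
    rw [← he j]
    exact swap_color _ _ (by rw [he, h₀]) _
  have he₀ : e' j₀ = k₀ := Equiv.swap_apply_left _ _
  refine ⟨e'.trans (Equiv.swap (e' j₁) k₁), fun j => ?_, ?_, Equiv.swap_apply_left _ _⟩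
  · rw [← he' j]
    exact swap_color _ _ (by rw [he', h₁]) _
  · change Equiv.swap (e' j₁) k₁ (e' j₀) = k₀
    rw [he₀, Equiv.swap_apply_of_ne_of_ne _ hk]
    rw [← he₀]
    exact fun h => hj (e'.injective h)

section Sheets

variable {G : Type} [Group G]

/-- Indices for copies of `G`: the first set colours the points of the copy, the second one provides
enough copies of each colouring. -/
abbrev Sheet (G : Type) : Type := Set G × Set G

/-- The colour of a point of a sheet. -/
def Colored (z : G × Sheet G) : Prop := z.1 ∈ z.2.1

variable {B : Type} [Group B]

theorem exists_coset_section (β : B →* G) (p : G) :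
    ∃ σ : G ⧸ β.range → G, (∀ q, (σ q : G ⧸ β.range) = q) ∧ σ (p : G ⧸ β.range) = p := by
  classical
  refine ⟨Function.update Quotient.out (p : G ⧸ β.range) p, fun q => ?_, Function.update_self ..⟩
  rcases eq_or_ne q (p : G ⧸ β.range) with rfl | h
  · rw [Function.update_self]
  · rw [Function.update_of_ne h]
    exact Quotient.out_eq q

theorem exists_sheet_coordinates [Infinite G] {β : B →* G} (hβ : Function.Injective β) (p : G) :
    ∃ e : B × ((G ⧸ β.range) × Sheet G) ≃ G × Sheet G,
      (∀ b b' j, e (b * b', j) = ((e (b, j)).1 * β b', (e (b, j)).2)) ∧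
      (∀ s, e (1, ((p : G ⧸ β.range), s)) = (p, s)) ∧
      ∀ c : Set B, Nonempty ({j // {b | Colored (e (b, j))} = c} ≃ Set G) := by
  obtain ⟨σ, hσ, hσp⟩ := exists_coset_section β p
  have hmk : ∀ q b, ((σ q * β b : G) : G ⧸ β.range) = q := fun q b => by
    rw [QuotientGroup.mk_mul_of_mem _ (MonoidHom.mem_range.2 ⟨b, rfl⟩), hσ]
  let e : B × ((G ⧸ β.range) × Sheet G) ≃ G × Sheet G :=
    Equiv.ofBijective (fun z => (σ z.2.1 * β z.1, z.2.2)) (by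
      constructor
      · rintro ⟨b, q, s⟩ ⟨b', q', s'⟩ h
        simp only [Prod.mk.injEq] at h
        obtain ⟨h1, rfl⟩ := h
        obtain rfl : q = q' := by rw [← hmk q b, h1, hmk]
        rw [hβ (mul_left_cancel h1)]
      · rintro ⟨x, s⟩
        obtain ⟨b, hb⟩ : (σ (x : G ⧸ β.range))⁻¹ * x ∈ β.range :=
          QuotientGroup.eq.1 (hσ _)
        exact ⟨(b, (x, s)), by simp [hb]⟩)
  have he : ∀ b q s, e (b, (q, s)) = (σ q * β b, s) := fun _ _ _ => rfl
  refine ⟨e, ?_, ?_, ?_⟩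
  · rintro b b' ⟨q, s⟩
    simp [he, mul_assoc]
  · intro s
    simp [he, hσp]
  · intro c
    rw [← Cardinal.eq]
    have hinf : Cardinal.aleph0 ≤ Cardinal.mk (Set G) := Cardinal.aleph0_le_mk _
    have hle : Cardinal.mk (G ⧸ β.range) ≤ Cardinal.mk (Set G) :=
      (Cardinal.mk_quotient_le).trans (by rw [Cardinal.mk_set]; exact (Cardinal.cantor _).le)
    refine le_antisymm ((Cardinal.mk_subtype_le _).trans ?_) ?_
    · simp only [Cardinal.mk_prod, Cardinal.lift_id]
      rw [Cardinal.mul_eq_self hinf]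
      exact (mul_le_mul_left hle _).trans (Cardinal.mul_eq_self hinf).le
    · refine Cardinal.mk_le_of_injective
        (f := fun w => ⟨((p : G ⧸ β.range), ((fun b => p * β b) '' c, w)), ?_⟩) ?_
      · ext b
        simp only [Set.mem_ofPred_eq, Colored, he, hσp]
        exact Function.Injective.mem_set_image
          (fun b b' h => hβ (mul_left_cancel h))
      · intro w w' h
        simpa using h

/-- Two free actions of `B` on the sheets, through embeddings into `G`, are conjugate by a
permutation that preserves colours and identifies two prescribed cosets on two given sheets. -/
theorem exists_perm_conj_of_colored [Infinite G] {β β' : B →* G} (hβ : Function.Injective β)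
    (hβ' : Function.Injective β') {p p' : G} {s₀ s₁ : Sheet G} (hs : s₀ ≠ s₁)
    (h₀ : ∀ b, Colored (p * β b, s₀) ↔ Colored (p' * β' b, s₀))
    (h₁ : ∀ b, Colored (p * β b, s₁) ↔ Colored (p' * β' b, s₁)) :
    ∃ r : Equiv.Perm (G × Sheet G),
      (∀ b x s, r (x * β b, s) = ((r (x, s)).1 * β' b, (r (x, s)).2)) ∧
      (∀ z, Colored (r z) ↔ Colored z) ∧ r (p, s₀) = (p', s₀) ∧ r (p, s₁) = (p', s₁) := by
  obtain ⟨e, he, hep, hec⟩ := exists_sheet_coordinates hβ p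
  obtain ⟨e', he', hep', hec'⟩ := exists_sheet_coordinates hβ' p'
  have hcoord : ∀ b s, e (b, (p, s)) = (p * β b, s) := fun b s => by
    have := he 1 b (p, s)
    rwa [one_mul, hep] at this
  have hcoord' : ∀ b s, e' (b, (p', s)) = (p' * β' b, s) := fun b s => by
    have := he' 1 b (p', s)
    rwa [one_mul, hep'] at this
  obtain ⟨θ, hθ, hθ₀, hθ₁⟩ := Equiv.exists_comp_eq_and_apply_eq
    (f := fun j => {b | Colored (e (b, j))}) (f' := fun j => {b | Colored (e' (b, j))})
    (j₀ := ((p : G ⧸ β.range), s₀)) (j₁ := (p, s₁)) (k₀ := (p', s₀)) (k₁ := (p', s₁))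
    (fun c => ⟨(hec c).some.trans (hec' c).some.symm⟩) (by simpa using hs) (by simpa using hs)
    (by ext b; simpa [hcoord, hcoord'] using h₀ b) (by ext b; simpa [hcoord, hcoord'] using h₁ b)
  let r : Equiv.Perm (G × Sheet G) :=
    e.symm.trans (((Equiv.refl B).prodCongr θ).trans e')
  have hr : ∀ b j, r (e (b, j)) = e' (b, θ j) := fun b j => by simp [r]
  refine ⟨r, fun b x s => ?_, fun z => ?_, ?_, ?_⟩
  · obtain ⟨⟨b₀, j⟩, hj⟩ := e.surjective (x, s)
    have hx : (x * β b, s) = e (b₀ * b, j) := by rw [he, hj]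
    rw [hx, hr, he', ← hj, hr]
  · obtain ⟨⟨b₀, j⟩, rfl⟩ := e.surjective z
    rw [hr]
    exact Set.ext_iff.1 (hθ j) b₀
  · rw [← hep, hr, hθ₀, hep']
  · rw [← hep, hr, hθ₁, hep']

end Sheets

section Model

/-- The free abelian group of configurations: one coordinate for the control state and one for
each register in `K`. -/
abbrev ConfigGroup (K : Type) : Type := Option K → Multiplicative ℤ

/-- A rule of an affine system: it sends the point with parameters `b` of the source coset to the
point with the same parameters of the target coset. -/
structure AffineRule (K : Type) where
  source : ConfigGroup K
  target : ConfigGroup K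
  sourceScale : K → ℤ
  targetScale : K → ℤ
  sourceScale_ne : ∀ k, sourceScale k ≠ 0
  targetScale_ne : ∀ k, targetScale k ≠ 0

/-- The homomorphism raising each register to a given power. -/
def scaleHom {K : Type} (m : K → ℤ) : (K → Multiplicative ℤ) →* ConfigGroup K where
  toFun b := fun o => o.elim 1 fun k => b k ^ m k
  map_one' := by ext o; cases o <;> simp
  map_mul' b b' := by ext o; cases o <;> simp [mul_zpow]

theorem scaleHom_injective {K : Type} {m : K → ℤ} (hm : ∀ k, m k ≠ 0) :
    Function.Injective (scaleHom m) := by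
  intro b b' h
  ext k
  have := congrFun h (some k)
  have h2 : b k ^ m k = b' k ^ m k := this
  exact congrArg _ (zpow_left_injective (hm k) h2)

theorem scaleHom_mulSingle {K : Type} [DecidableEq K] (m : K → ℤ) (k : K) (n : Multiplicative ℤ) :
    scaleHom m (Pi.mulSingle k n) = Pi.mulSingle (some k) (n ^ m k) := by
  funext o
  cases o with
  | none => simp [scaleHom]
  | some j =>
    rcases eq_or_ne j k with rfl | h
    · simp [scaleHom]
    · simp [scaleHom, h]

/-- The partial map defined by a rule, as a relation. -/
def AffineRule.Rel {K : Type} (ρ : AffineRule K) (p p' : ConfigGroup K) : Prop :=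
  ∃ b, p = ρ.source * scaleHom ρ.sourceScale b ∧ p' = ρ.target * scaleHom ρ.targetScale b

/-- Letting permutations of `Y` act on `Y × ℤ` through the first coordinate. -/
def Equiv.Perm.prodIntHom (Y : Type*) : Equiv.Perm Y →* Equiv.Perm (Y × ℤ) where
  toFun g := g.prodCongr (Equiv.refl ℤ)
  map_one' := rfl
  map_mul' _ _ := rfl

/-- Right translations of the sheets. -/
def sheetTranslation (A : Type) [Group A] : A →* Equiv.Perm (A × Sheet A) where
  toFun a := (Equiv.mulRight a⁻¹).prodCongr (Equiv.refl _)
  map_one' := by ext z <;> simp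
  map_mul' a a' := by ext z <;> simp [mul_assoc]

theorem sheetTranslation_apply {A : Type} [Group A] (a x : A) (s : Sheet A) :
    sheetTranslation A a (x, s) = (x * a⁻¹, s) := rfl

/-- Shifting the integer coordinate over the points satisfying a predicate. -/
noncomputable def shiftOn {Y : Type*} (C : Y → Prop) : Equiv.Perm (Y × ℤ) :=
  open Classical in Equiv.sigmaEquivProd Y ℤ |>.permCongr
    (Equiv.sigmaCongrRight fun y => Equiv.addRight (if C y then 1 else 0))

theorem shiftOn_apply_of_pos {Y : Type*} {C : Y → Prop} {y : Y} (h : C y) (n : ℤ) :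
    shiftOn C (y, n) = (y, n + 1) := by
  simp [shiftOn, h, Equiv.permCongr_apply]

theorem shiftOn_apply_of_neg {Y : Type*} {C : Y → Prop} {y : Y} (h : ¬ C y) (n : ℤ) :
    shiftOn C (y, n) = (y, n) := by
  simp [shiftOn, h, Equiv.permCongr_apply]

theorem commute_shiftOn {Y : Type*} {C : Y → Prop} {g : Equiv.Perm Y} (hg : ∀ y, C (g y) ↔ C y) :
    Commute (shiftOn C) (Equiv.Perm.prodIntHom Y g) := by
  refine Equiv.ext ?_
  rintro ⟨y, n⟩
  change shiftOn C (g y, n) = Equiv.Perm.prodIntHom Y g (shiftOn C (y, n))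
  by_cases h : C y
  · rw [shiftOn_apply_of_pos h, shiftOn_apply_of_pos ((hg y).2 h)]
    rfl
  · rw [shiftOn_apply_of_neg h, shiftOn_apply_of_neg (mt (hg y).1 h)]
    rfl

/-- If a set of configurations is invariant under the rules, then there is a group in which the
rules act by conjugation and membership in the set is detected by commutation with `κ`. -/
theorem exists_affine_model {K ι : Type} [Nonempty K] (ρ : ι → AffineRule K)
    {H : Set (ConfigGroup K)} (hH : ∀ i p p', (ρ i).Rel p p' → (p ∈ H ↔ p' ∈ H))
    {p₀ p : ConfigGroup K} (hp₀ : p₀ ∈ H) (hp : p ∉ H) :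
    ∃ (Γ : Type) (_ : Group Γ) (X : ConfigGroup K →* Γ) (t κ : Γ) (r : ι → Γ),
      (∀ i b, r i * X (scaleHom (ρ i).sourceScale b) * (r i)⁻¹ =
        X (scaleHom (ρ i).targetScale b)) ∧
      (∀ i, r i * (X (ρ i).source * t * (X (ρ i).source)⁻¹) * (r i)⁻¹ =
        X (ρ i).target * t * (X (ρ i).target)⁻¹) ∧
      t ^ 2 = 1 ∧ t ≠ 1 ∧ Commute κ (X p₀ * t * (X p₀)⁻¹) ∧ (∀ i, Commute κ (r i)) ∧
      ∀ n : ℤ, n ≠ 0 →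
        (κ * (X p * t * (X p)⁻¹) * κ⁻¹ * (X p * t * (X p)⁻¹)⁻¹) ^ n ≠ 1 := by
  classical
  let A := ConfigGroup K
  let s₀ : Sheet A := (H⁻¹, ∅)
  let s₁ : Sheet A := (Set.univ, ∅)
  have hs : s₀ ≠ s₁ := fun h => hp <| by
    have hu : H⁻¹ = Set.univ := congrArg Prod.fst h
    have : p⁻¹ ∈ H⁻¹ := hu ▸ Set.mem_univ _
    simpa using this
  have hr : ∀ i, ∃ r : Equiv.Perm (A × Sheet A),
      (∀ b x s, r (x * scaleHom (ρ i).sourceScale b, s) =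
        ((r (x, s)).1 * scaleHom (ρ i).targetScale b, (r (x, s)).2)) ∧
      (∀ z, Colored (r z) ↔ Colored z) ∧
      r ((ρ i).source⁻¹, s₀) = ((ρ i).target⁻¹, s₀) ∧
      r ((ρ i).source⁻¹, s₁) = ((ρ i).target⁻¹, s₁) := by
    intro i
    refine exists_perm_conj_of_colored (scaleHom_injective (ρ i).sourceScale_ne)
      (scaleHom_injective (ρ i).targetScale_ne) hs (fun b => ?_) fun b => Iff.rfl
    simp only [Colored, s₀, Set.mem_inv, mul_inv, inv_inv, ← map_inv]
    exact hH i _ _ ⟨b⁻¹, rfl, rfl⟩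
  choose r hr₁ hr₂ hr₃ hr₄ using hr
  let Y := A × Sheet A
  let D : Equiv.Perm Y →* Equiv.Perm (Y × ℤ) := Equiv.Perm.prodIntHom Y
  let X := sheetTranslation A
  let t : Equiv.Perm Y := Equiv.swap (1, s₀) (1, s₁)
  have ht : ∀ q, X q * t * (X q)⁻¹ = Equiv.swap (q⁻¹, s₀) (q⁻¹, s₁) := by
    intro q
    rw [← Equiv.swap_apply_apply]
    simp [X, sheetTranslation_apply]
  have hD : ∀ q, D (X q) * D t * (D (X q))⁻¹ = D (Equiv.swap (q⁻¹, s₀) (q⁻¹, s₁)) := by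
    intro q
    rw [← ht, map_mul, map_mul, map_inv]
  refine ⟨Equiv.Perm (Y × ℤ), inferInstance, D.comp X, D t, shiftOn Colored, fun i => D (r i),
    fun i b => ?_, fun i => ?_, ?_, ?_, ?_, fun i => commute_shiftOn (hr₂ i), ?_⟩
  · rw [mul_inv_eq_iff_eq_mul]
    simp only [MonoidHom.comp_apply, ← map_mul]
    congr 1
    refine Equiv.ext ?_
    rintro ⟨x, s⟩
    have := hr₁ i b⁻¹ x s
    simp only [map_inv] at this
    exact this
  · simp only [MonoidHom.comp_apply, hD]
    rw [← map_inv, ← map_mul, ← map_mul, ← Equiv.swap_apply_apply, hr₃, hr₄]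
  · rw [← map_pow, sq, Equiv.swap_mul_self, map_one]
  · intro h
    have h1 := congrArg (fun g : Equiv.Perm (Y × ℤ) => (g ((1, s₀), 0)).1) h
    have h2 : t (1, s₀) = (1, s₀) := h1
    rw [Equiv.swap_apply_left] at h2
    exact hs (congrArg Prod.snd h2).symm
  · simp only [MonoidHom.comp_apply, hD]
    refine commute_shiftOn fun y => ?_
    have h₀ : Colored ((p₀⁻¹, s₀) : Y) := by
      change p₀⁻¹⁻¹ ∈ H
      rwa [inv_inv]
    have h₁ : Colored ((p₀⁻¹, s₁) : Y) := trivial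
    rcases eq_or_ne y (p₀⁻¹, s₀) with rfl | hy₀
    · rw [Equiv.swap_apply_left]
      exact iff_of_true h₁ h₀
    rcases eq_or_ne y (p₀⁻¹, s₁) with rfl | hy₁
    · rw [Equiv.swap_apply_right]
      exact iff_of_true h₀ h₁
    · rw [Equiv.swap_apply_of_ne_of_ne hy₀ hy₁]
  · simp only [MonoidHom.comp_apply, hD]
    set w := shiftOn Colored * D (Equiv.swap (p⁻¹, s₀) (p⁻¹, s₁)) * (shiftOn Colored)⁻¹ *
      (D (Equiv.swap (p⁻¹, s₀) (p⁻¹, s₁)))⁻¹ with hw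
    have h₀ : ¬ Colored ((p⁻¹, s₀) : Y) := by
      change p⁻¹⁻¹ ∉ H
      rwa [inv_inv]
    have h₁ : Colored ((p⁻¹, s₁) : Y) := trivial
    have hstep : ∀ n, w ((p⁻¹, s₁), n) = ((p⁻¹, s₁), n + 1) := by
      intro n
      have e1 : (D (Equiv.swap (p⁻¹, s₀) (p⁻¹, s₁)))⁻¹ ((p⁻¹, s₁), n) = ((p⁻¹, s₀), n) := by
        rw [Equiv.Perm.inv_eq_iff_eq]
        exact Prod.ext (Equiv.swap_apply_left _ _).symm rfl
      have e2 : (shiftOn Colored)⁻¹ (((p⁻¹, s₀), n) : Y × ℤ) = ((p⁻¹, s₀), n) := by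
        rw [Equiv.Perm.inv_eq_iff_eq, shiftOn_apply_of_neg h₀]
      have e3 : D (Equiv.swap (p⁻¹, s₀) (p⁻¹, s₁)) ((p⁻¹, s₀), n) = ((p⁻¹, s₁), n) :=
        Prod.ext (Equiv.swap_apply_left _ _) rfl
      rw [hw, Equiv.Perm.mul_apply, e1, Equiv.Perm.mul_apply, e2, Equiv.Perm.mul_apply, e3,
        shiftOn_apply_of_pos h₁]
    have hpow : ∀ m : ℕ, ∀ n, (w ^ m) ((p⁻¹, s₁), n) = ((p⁻¹, s₁), n + m) := by
      intro m
      induction m with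
      | zero => simp
      | succ m ih =>
        intro n
        rw [pow_succ, Equiv.Perm.mul_apply, hstep, ih]
        push_cast
        rw [add_assoc, add_comm (1 : ℤ)]
    intro n hn h
    have habs : w ^ n.natAbs = 1 := by
      rcases Int.natAbs_eq n with h' | h'
      · rw [← zpow_natCast, ← h', h]
      · rw [← zpow_natCast, ← inv_inj, ← zpow_neg, ← h', h, inv_one]
    have := congrArg (fun g : Equiv.Perm (Y × ℤ) => (g ((p⁻¹, s₁), 0)).2) habs
    simp [hpow] at this
    exact hn this

/-- A group embeds into a larger one containing an element `c` such that a given element of infinite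
order is conjugate to all the products `g * c`. -/
theorem exists_embedding_conj_mul {Γ : Type} [Group Γ] {w : Γ} (hw : ∀ n : ℤ, n ≠ 0 → w ^ n ≠ 1) :
    ∃ (Γ' : Type) (_ : Group Γ') (j : Γ →* Γ') (c : Γ'), Function.Injective j ∧
      ∀ g, ∃ s, s * j w * s⁻¹ = j g * c := by
  let G := Γ × Multiplicative ℤ
  have hT : Function.Injective (sheetTranslation G) := by
    intro a b h
    have := congrArg (fun e : Equiv.Perm (G × Sheet G) => (e (1, (∅, ∅))).1) h
    simp only [sheetTranslation_apply, one_mul] at this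
    exact inv_injective this
  refine ⟨Equiv.Perm (G × Sheet G), inferInstance,
    (sheetTranslation G).comp (MonoidHom.inl Γ (Multiplicative ℤ)),
    sheetTranslation G (1, Multiplicative.ofAdd 1), hT.comp ?_, fun g => ?_⟩
  · intro a b h
    exact congrArg Prod.fst h
  have hinj : ∀ u : G, (∀ n : ℤ, n ≠ 0 → u ^ n ≠ 1) →
      Function.Injective (zpowersHom G u) := by
    intro u hu
    rw [injective_iff_map_eq_one]
    intro n hn
    by_contra hne
    exact hu n.toAdd (fun h => hne (by rw [← ofAdd_toAdd n, h]; rfl)) hn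
  obtain ⟨r, hr, -⟩ := exists_perm_conj_of_colored (G := G)
    (β := zpowersHom G (w, 1)) (β' := zpowersHom G (g, Multiplicative.ofAdd 1))
    (hinj _ fun n hn h => hw n hn (by
      have := congrArg (MonoidHom.fst Γ (Multiplicative ℤ)) h
      rwa [map_zpow, map_one] at this))
    (hinj _ fun n hn h => hn (by
      have := congrArg (MonoidHom.snd Γ (Multiplicative ℤ)) h
      rw [map_zpow] at this
      have h2 : (Multiplicative.ofAdd (1 : ℤ)) ^ n = 1 := this
      have h3 := congrArg Multiplicative.toAdd h2
      rw [toAdd_zpow, toAdd_ofAdd, toAdd_one, smul_eq_mul, mul_one] at h3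
      exact h3))
    (p := 1) (p' := 1) (s₀ := (Set.univ, ∅)) (s₁ := (Set.univ, Set.univ))
    (fun h => by
      have : (1 : G) ∈ (∅ : Set G) := by
        rw [show (∅ : Set G) = Set.univ from congrArg Prod.snd h]
        trivial
      exact this)
    (fun b => Iff.rfl) (fun b => Iff.rfl)
  refine ⟨r, ?_⟩
  rw [mul_inv_eq_iff_eq_mul, MonoidHom.comp_apply, MonoidHom.comp_apply, ← map_mul]
  refine Equiv.ext ?_
  rintro ⟨x, s⟩
  have := hr (Multiplicative.ofAdd (-1)) x s
  simp only [zpowersHom_apply, toAdd_ofAdd, zpow_neg, zpow_one] at this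
  change r (x * (w, 1)⁻¹, s) = _
  rw [this]
  change _ = ((r (x, s)).1 * ((g, 1) * (1, Multiplicative.ofAdd 1))⁻¹, (r (x, s)).2)
  have hg : ((g, 1) * (1, Multiplicative.ofAdd 1) : G) = (g, Multiplicative.ofAdd (1 : ℤ)) :=
    Prod.ext (mul_one g) (one_mul _)
  rw [hg]

end Model

section Presentation

open Multiplicative (ofAdd toAdd)
open scoped commutatorElement

/-- Generators describing the configurations, the rules, the marker and the detector. -/
abbrev BaseLetter (K ι : Type) : Type := (Option K ⊕ ι) ⊕ Bool

/-- All the generators: the base letters, one letter adjoined to them, and one conjugating letter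
for each of these. -/
abbrev Letter (K ι : Type) : Type := Option (BaseLetter K ι) ⊕ Option (BaseLetter K ι)

namespace Letter

variable {K ι : Type}

/-- The generator recording one coordinate of a configuration. -/
def coord (o : Option K) : FreeGroup (Letter K ι) := .of (.inl (some (.inl (.inl o))))

/-- The generator associated with a rule. -/
def rule (i : ι) : FreeGroup (Letter K ι) := .of (.inl (some (.inl (.inr i))))

variable (K ι) in
/-- The generator of order two placed at a configuration. -/
def marker : FreeGroup (Letter K ι) := .of (.inl (some (.inr false)))

variable (K ι) in
/-- The generator commuting with the markers of accepted configurations. -/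
def detector : FreeGroup (Letter K ι) := .of (.inl (some (.inr true)))

variable (K ι) in
/-- The adjoined generator. -/
def adjoined : FreeGroup (Letter K ι) := .of (.inl none)

/-- The conjugating generators. -/
def conjugator (o : Option (BaseLetter K ι)) : FreeGroup (Letter K ι) := .of (.inr o)

/-- The base letters as elements of the free group, together with the trivial element. -/
def base (o : Option (BaseLetter K ι)) : FreeGroup (Letter K ι) :=
  o.elim 1 fun b => .of (.inl (some b))

variable [Fintype K]

/-- The word representing a configuration. -/
noncomputable def word (p : ConfigGroup K) : FreeGroup (Letter K ι) :=
  ((Finset.univ : Finset (Option K)).toList.map fun o => coord o ^ (toAdd (p o))).prod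

/-- The marker conjugated to a given configuration. -/
noncomputable def markerAt (p : ConfigGroup K) : FreeGroup (Letter K ι) :=
  word p * marker K ι * (word p)⁻¹

/-- The relators which encode the rules and the accepted configuration. -/
def ruleRelators (ρ : ι → AffineRule K) (pf : ConfigGroup K) : Set (FreeGroup (Letter K ι)) :=
  Set.range (fun q : Option K × Option K => ⁅coord (ι := ι) q.1, coord (ι := ι) q.2⁆) ∪
  Set.range (fun q : ι × K => rule q.1 * coord (some q.2) ^ (ρ q.1).sourceScale q.2 *
    (rule q.1)⁻¹ * (coord (some q.2) ^ (ρ q.1).targetScale q.2)⁻¹) ∪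
  Set.range (fun i : ι => rule i * markerAt (ρ i).source * (rule i)⁻¹ *
    (markerAt (ρ i).target)⁻¹) ∪
  {marker K ι ^ 2, ⁅detector K ι, markerAt pf⁆} ∪
  Set.range (fun i : ι => ⁅detector K ι, rule i⁆)

/-- The relator making a product of a base letter with the adjoined letter conjugate to the
commutator which detects whether a configuration is accepted. -/
noncomputable def killRelator (p : ConfigGroup K) (o : Option (BaseLetter K ι)) :
    FreeGroup (Letter K ι) :=
  conjugator o * ⁅detector K ι, markerAt p⁆ * (conjugator o)⁻¹ * (base o * adjoined K ι)⁻¹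

/-- All the relators attached to a configuration. -/
def relators (ρ : ι → AffineRule K) (pf p : ConfigGroup K) : Set (FreeGroup (Letter K ι)) :=
  ruleRelators ρ pf ∪ Set.range (killRelator p)

theorem finite_ruleRelators [Finite ι] (ρ : ι → AffineRule K) (pf : ConfigGroup K) :
    (ruleRelators ρ pf).Finite := by
  unfold ruleRelators
  exact ((((Set.finite_range _).union (Set.finite_range _)).union (Set.finite_range _)).union
    (Set.toFinite _)).union (Set.finite_range _)

section Map

variable {Γ : Type*} [Group Γ] {f : FreeGroup (Letter K ι) →* Γ}
  {ρ : ι → AffineRule K} {pf p : ConfigGroup K}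

theorem map_word [DecidableEq K] {X : ConfigGroup K →* Γ}
    (hX : ∀ o, f (coord o) = X (Pi.mulSingle o (ofAdd 1))) (p : ConfigGroup K) :
    f (word p) = X p := by
  have h : ∀ o, f (coord o ^ toAdd (p o)) = X (Pi.mulSingle o (p o)) := by
    intro o
    rw [map_zpow, hX, ← map_zpow, ← Pi.mulSingle_zpow, ← ofAdd_zsmul, smul_eq_mul, mul_one,
      ofAdd_toAdd]
  rw [word, map_list_prod, List.map_map]
  simp only [Function.comp_def, h]
  conv_rhs => rw [← Finset.univ_prod_mulSingle p, ← Finset.prod_map_toList, map_list_prod,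
    List.map_map]
  rfl

theorem forall_ruleRelators_map_eq_one_iff :
    (∀ r ∈ ruleRelators ρ pf, f r = 1) ↔
      (∀ o o', Commute (f (coord o)) (f (coord o'))) ∧
      (∀ i k, f (rule i) * f (coord (some k)) ^ (ρ i).sourceScale k * (f (rule i))⁻¹ =
        f (coord (some k)) ^ (ρ i).targetScale k) ∧
      (∀ i, f (rule i) * f (markerAt (ρ i).source) * (f (rule i))⁻¹ =
        f (markerAt (ρ i).target)) ∧
      f (marker K ι) ^ 2 = 1 ∧ Commute (f (detector K ι)) (f (markerAt pf)) ∧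
      ∀ i, Commute (f (detector K ι)) (f (rule i)) := by
  simp only [ruleRelators, Set.mem_union, Set.mem_range, Set.mem_insert_iff,
    Set.mem_singleton_iff, or_imp, forall_and, forall_exists_index, forall_apply_eq_imp_iff,
    forall_eq, map_mul, map_inv, map_zpow, map_pow, map_commutatorElement,
    commutatorElement_eq_one_iff_commute, mul_inv_eq_one, and_assoc]
  simp only [Prod.forall]

theorem map_killRelator_eq_one_iff {o : Option (BaseLetter K ι)} :
    f (killRelator p o) = 1 ↔
      f (conjugator o) * ⁅f (detector K ι), f (markerAt p)⁆ * (f (conjugator o))⁻¹ =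
        f (base o) * f (adjoined K ι) := by
  simp only [killRelator, map_mul, map_inv, map_commutatorElement, mul_inv_eq_one]

theorem exists_configHom [DecidableEq K] (h : ∀ o o', Commute (f (coord o)) (f (coord o'))) :
    ∃ X : ConfigGroup K →* Γ, ∀ o, f (coord o) = X (Pi.mulSingle o (ofAdd 1)) := by
  have hcomm : Pairwise fun o o' => ∀ a b,
      Commute (zpowersHom Γ (f (coord o)) a) (zpowersHom Γ (f (coord o')) b) :=
    fun o o' _ a b => (h o o').zpow_zpow _ _
  refine ⟨MonoidHom.noncommPiCoprod (fun o => zpowersHom Γ (f (coord o))) hcomm, fun o => ?_⟩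
  rw [MonoidHom.noncommPiCoprod_mulSingle]
  simp

/-- In every quotient where the rule relators hold, the detector commutes with the markers of the
configurations from which the accepted one can be reached. -/
theorem commute_detector_markerAt (h : ∀ r ∈ ruleRelators ρ pf, f r = 1)
    (hp : Relation.ReflTransGen (fun q q' => ∃ i, (ρ i).Rel q q') p pf) :
    Commute (f (detector K ι)) (f (markerAt p)) := by
  classical
  obtain ⟨hc, hs, hm, -, hpf, hd⟩ := forall_ruleRelators_map_eq_one_iff.1 h
  obtain ⟨X, hX⟩ := exists_configHom hc
  have hscale : ∀ i b, f (rule i) * X (scaleHom (ρ i).sourceScale b) * (f (rule i))⁻¹ =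
      X (scaleHom (ρ i).targetScale b) := by
    intro i b
    have : ((MulAut.conj (f (rule i))).toMonoidHom.comp X).comp (scaleHom (ρ i).sourceScale) =
        X.comp (scaleHom (ρ i).targetScale) := by
      refine MonoidHom.pi_ext fun k n => ?_
      have hk : ∀ m : ℤ, X (Pi.mulSingle (some k) (n ^ m)) =
          (f (coord (some k)) ^ m) ^ toAdd n := by
        intro m
        rw [hX, ← map_zpow, ← map_zpow, ← Pi.mulSingle_zpow, ← Pi.mulSingle_zpow,
          ← zpow_mul, mul_comm, zpow_mul, ← ofAdd_zsmul, smul_eq_mul, mul_one, ofAdd_toAdd]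
      simp only [MonoidHom.comp_apply, scaleHom_mulSingle, hk, map_zpow]
      rw [← hs i k]
      simp [conj_zpow]
    exact DFunLike.congr_fun this b
  induction hp using Relation.ReflTransGen.head_induction_on with
  | refl => exact hpf
  | head hstep _ ih =>
    obtain ⟨i, b, rfl, rfl⟩ := hstep
    have key : f (rule i) * f (markerAt ((ρ i).source * scaleHom (ρ i).sourceScale b)) *
        (f (rule i))⁻¹ = f (markerAt ((ρ i).target * scaleHom (ρ i).targetScale b)) := by
      have hm' := hm i
      simp only [markerAt, map_mul, map_inv, map_word hX] at hm' ⊢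
      rw [← map_mul, ← map_mul, mul_comm (ρ i).source, mul_comm (ρ i).target, map_mul, map_mul,
        ← hscale]
      have : ∀ r s u v m : Γ, r * (v * m * v⁻¹) * r⁻¹ = u →
          r * (s * v * m * (s * v)⁻¹) * r⁻¹ = r * s * r⁻¹ * u * (r * s * r⁻¹)⁻¹ := by
        rintro r s u v m rfl
        group
      rw [this _ _ _ _ _ hm']
      group
    rw [← key] at ih
    have := ((hd i).inv_right.mul_right ih).mul_right (hd i)
    simpa [mul_assoc] using this

end Map

end Letter

end Presentation

section Dichotomy

open Multiplicative (ofAdd toAdd)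
open scoped commutatorElement

namespace Letter

variable {K ι : Type}

variable (K ι) in
/-- The subgroup normally generated by the base letters and the adjoined letter. -/
def collapse : Subgroup (FreeGroup (Letter K ι)) :=
  Subgroup.normalClosure (Set.range fun o => .of (.inl o))

instance : (collapse K ι).Normal := Subgroup.normalClosure_normal

theorem mk_of_inl_collapse (o : Option (BaseLetter K ι)) :
    QuotientGroup.mk' (collapse K ι) (.of (.inl o)) = 1 :=
  (QuotientGroup.eq_one_iff _).2 (Subgroup.subset_normalClosure ⟨o, rfl⟩)

theorem mem_collapse_of_sq_mem {d : FreeGroup (Letter K ι)} (hd : d ^ 2 ∈ collapse K ι) :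
    d ∈ collapse K ι := by
  let ψ : FreeGroup (Letter K ι) →* FreeGroup (Option (BaseLetter K ι)) :=
    FreeGroup.lift (Sum.elim (fun _ => 1) FreeGroup.of)
  have hle : collapse K ι ≤ ψ.ker := by
    refine Subgroup.normalClosure_le_normal ?_
    rintro _ ⟨o, rfl⟩
    simp [ψ, MonoidHom.mem_ker]
  have hfac : QuotientGroup.mk' (collapse K ι) =
      ((QuotientGroup.mk' (collapse K ι)).comp (FreeGroup.map Sum.inr)).comp ψ := by
    refine FreeGroup.ext_hom _ _ ?_
    rintro (o | o)
    · rw [mk_of_inl_collapse]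
      simp [ψ]
    · simp [ψ]
  have hψ : ψ d = 1 := by
    have : ψ d ^ 2 = 1 := by rw [← map_pow]; exact hle hd
    simpa using this
  rw [← QuotientGroup.eq_one_iff]
  have := DFunLike.congr_fun hfac d
  rwa [MonoidHom.comp_apply, hψ, map_one] at this

theorem exists_not_commute_collapse :
    ∃ a ∈ collapse K ι, ∃ b ∈ collapse K ι, ¬ Commute a b := by
  refine ⟨_, Subgroup.subset_normalClosure ⟨none, rfl⟩, _,
    Subgroup.subset_normalClosure ⟨some (.inr true), rfl⟩, fun h => ?_⟩
  simpa using FreeGroup.eq_of_commute_of h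

theorem not_commute_marker_sq_conj :
    ¬ Commute (marker K ι ^ 2) (adjoined K ι * marker K ι ^ 2 * (adjoined K ι)⁻¹) := by
  intro h
  let g : Letter K ι → Equiv.Perm (Fin 4) :=
    Sum.elim (fun o => o.elim (Equiv.swap 2 3) fun _ => Equiv.swap 0 1 * Equiv.swap 1 2)
      fun _ => 1
  have := h.map (FreeGroup.lift g)
  simp only [map_mul, map_pow, map_inv, marker, adjoined, FreeGroup.lift_apply_of, g,
    Sum.elim_inl, Option.elim] at this
  exact absurd this.eq (by decide)

variable [Fintype K]

/-- The normal subgroup attached to a configuration. -/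
def relations (ρ : ι → AffineRule K) (pf p : ConfigGroup K) :
    Subgroup (FreeGroup (Letter K ι)) :=
  Subgroup.normalClosure (relators ρ pf p)

variable {ρ : ι → AffineRule K} {pf p : ConfigGroup K}

instance : (relations ρ pf p).Normal := Subgroup.normalClosure_normal

theorem exists_not_commute_relations :
    ∃ a ∈ relations ρ pf p, ∃ b ∈ relations ρ pf p, ¬ Commute a b := by
  have h : marker K ι ^ 2 ∈ relations ρ pf p :=
    Subgroup.subset_normalClosure (.inl (.inl (.inr (.inl rfl))))
  exact ⟨_, h, _, Subgroup.Normal.conj_mem inferInstance _ h _, not_commute_marker_sq_conj⟩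

theorem relations_le_collapse : relations ρ pf p ≤ collapse K ι := by
  classical
  refine Subgroup.normalClosure_le_normal fun r hr => ?_
  rw [SetLike.mem_coe, ← QuotientGroup.eq_one_iff]
  change QuotientGroup.mk' (collapse K ι) r = 1
  have hcoord : ∀ o, QuotientGroup.mk' (collapse K ι) (coord o) = 1 :=
    fun o => mk_of_inl_collapse _
  have hmarker : QuotientGroup.mk' (collapse K ι) (marker K ι) = 1 := mk_of_inl_collapse _
  have hdetector : QuotientGroup.mk' (collapse K ι) (detector K ι) = 1 := mk_of_inl_collapse _
  have hadjoined : QuotientGroup.mk' (collapse K ι) (adjoined K ι) = 1 := mk_of_inl_collapse _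
  have hmarkerAt : ∀ q, QuotientGroup.mk' (collapse K ι) (markerAt q) = 1 := by
    intro q
    rw [markerAt, map_mul, map_mul, hmarker, mul_one, map_inv, mul_inv_cancel]
  have hbase : ∀ o, QuotientGroup.mk' (collapse K ι) (base o) = 1 := by
    rintro (_ | b)
    · exact map_one _
    · exact mk_of_inl_collapse _
  rcases hr with hr | ⟨o, rfl⟩
  · refine forall_ruleRelators_map_eq_one_iff.2 ⟨?_, ?_, ?_, ?_, ?_, ?_⟩ r hr
    · intro o o'
      rw [hcoord]
      exact Commute.one_left _
    · intro i k
      simp only [hcoord, one_zpow, mul_one, mul_inv_cancel]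
    · intro i
      simp only [hmarkerAt, mul_one, mul_inv_cancel]
    · rw [hmarker, one_pow]
    · rw [hdetector]
      exact Commute.one_left _
    · intro i
      rw [hdetector]
      exact Commute.one_left _
  · rw [map_killRelator_eq_one_iff, hdetector, commutatorElement_one_left, hbase, hadjoined,
      mul_one, mul_one, mul_inv_cancel]

theorem mk_eq_one_of_mem_relators {r : FreeGroup (Letter K ι)} (hr : r ∈ relators ρ pf p) :
    QuotientGroup.mk' (relations ρ pf p) r = 1 :=
  (QuotientGroup.eq_one_iff _).2 (Subgroup.subset_normalClosure hr)

theorem relations_eq_collapse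
    (hp : Relation.ReflTransGen (fun q q' => ∃ i, (ρ i).Rel q q') p pf) :
    relations ρ pf p = collapse K ι := by
  refine le_antisymm relations_le_collapse (Subgroup.normalClosure_le_normal ?_)
  have hcomm := commute_detector_markerAt (f := QuotientGroup.mk' (relations ρ pf p))
    (fun r hr => mk_eq_one_of_mem_relators (.inl hr)) hp
  have hkill : ∀ o : Option (BaseLetter K ι), QuotientGroup.mk' (relations ρ pf p) (base o) *
      QuotientGroup.mk' (relations ρ pf p) (adjoined K ι) = 1 := by
    intro o
    rw [← map_killRelator_eq_one_iff.1 (mk_eq_one_of_mem_relators (.inr ⟨o, rfl⟩)),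
      hcomm.commutator_eq, mul_one, mul_inv_cancel]
  have hadjoined : QuotientGroup.mk' (relations ρ pf p) (adjoined K ι) = 1 := by
    simpa [base] using hkill none
  rintro _ ⟨o, rfl⟩
  rw [SetLike.mem_coe, ← QuotientGroup.eq_one_iff]
  cases o with
  | none => exact hadjoined
  | some b =>
    have := hkill (some b)
    rwa [hadjoined, mul_one] at this

theorem marker_notMem_relations [Nonempty K]
    (hdet : ∀ i j q q' q'', (ρ i).Rel q q' → (ρ j).Rel q q'' → q' = q'')
    (hterm : ∀ i q, ¬ (ρ i).Rel pf q)
    (hp : ¬ Relation.ReflTransGen (fun q q' => ∃ i, (ρ i).Rel q q') p pf) :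
    marker K ι ∉ relations ρ pf p := by
  classical
  obtain ⟨Γ, _, X, t, κ, r, hscale, hrule, ht2, ht, hκpf, hκr, horder⟩ := exists_affine_model ρ
    (H := {q | Relation.ReflTransGen (fun q q' => ∃ i, (ρ i).Rel q q') q pf})
    (p₀ := pf) (p := p) (fun i q q' hqq' => by
      refine ⟨fun hq => ?_, fun hq' => .head ⟨i, hqq'⟩ hq'⟩
      rcases Relation.ReflTransGen.cases_head hq with rfl | ⟨q'', ⟨j, hj⟩, hq''⟩
      · exact absurd hqq' (hterm i _)
      · exact hdet j i q q'' q' hj hqq' ▸ hq'') .refl hp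
  obtain ⟨Γ', _, j, c, hj, hconj⟩ := exists_embedding_conj_mul horder
  choose s hs using hconj
  let b : BaseLetter K ι → Γ :=
    Sum.elim (Sum.elim (fun o => X (Pi.mulSingle o (ofAdd 1))) r) fun x => bif x then κ else t
  let f : FreeGroup (Letter K ι) →* Γ' := FreeGroup.lift
    (Sum.elim (fun o => o.elim c fun x => j (b x)) fun o => s (o.elim 1 b))
  have hcoord : ∀ o, f (coord o) = (j.comp X) (Pi.mulSingle o (ofAdd 1)) := fun o => by
    simp [f, b, coord]
  have hmarker : f (marker K ι) = j t := by simp [f, b, marker]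
  have hdetector : f (detector K ι) = j κ := by simp [f, b, detector]
  have hadjoined : f (adjoined K ι) = c := by simp [f, adjoined]
  have hr : ∀ i, f (rule i) = j (r i) := fun i => by simp [f, b, rule]
  have hmarkerAt : ∀ q, f (markerAt q) = j (X q * t * (X q)⁻¹) := fun q => by
    simp only [markerAt, map_mul, map_inv, map_word hcoord, hmarker, MonoidHom.comp_apply]
  have hbase : ∀ o, f (base o) = j (o.elim 1 b) := by
    rintro (_ | x)
    · simp [base]
    · simp [base, f]
  have hkill : relations ρ pf p ≤ f.ker := by
    refine Subgroup.normalClosure_le_normal ?_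
    rintro x (hx | ⟨o, rfl⟩)
    · refine forall_ruleRelators_map_eq_one_iff.2 ⟨?_, ?_, ?_, ?_, ?_, ?_⟩ x hx
      · intro o o'
        rw [hcoord, hcoord]
        exact (Commute.all _ _).map _
      · intro i k
        have := congrArg j (hscale i (Pi.mulSingle k (ofAdd 1)))
        simp only [scaleHom_mulSingle, Pi.mulSingle_zpow, map_mul, map_inv, map_zpow] at this
        simpa only [hr, hcoord, MonoidHom.comp_apply] using this
      · intro i
        simp only [hr, hmarkerAt]
        rw [← hrule, map_mul _ (r i * _), map_mul _ (r i), map_inv]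
      · rw [hmarker, ← map_pow, ht2, map_one]
      · rw [hdetector, hmarkerAt]
        exact hκpf.map j
      · intro i
        rw [hdetector, hr]
        exact (hκr i).map j
    · rw [SetLike.mem_coe, MonoidHom.mem_ker, map_killRelator_eq_one_iff, hdetector, hmarkerAt,
        hbase, hadjoined, ← map_commutatorElement, ← hs]
      simp [f, conjugator, commutatorElement_def]
  intro hmem
  have := hkill hmem
  rw [MonoidHom.mem_ker, hmarker, ← map_one j] at this
  exact ht (hj this)

/-- A configuration is accepted exactly when the fibre squares of the two quotients are isomorphic
subgroups. -/
theorem nonempty_fiberSquare_mulEquiv_iff [Nonempty K] {β : Type*}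
    {i : FreeGroup (Letter K ι) →* FreeGroup β} (hi : Function.Injective i)
    (hdet : ∀ i j q q' q'', (ρ i).Rel q q' → (ρ j).Rel q q'' → q' = q'')
    (hterm : ∀ i q, ¬ (ρ i).Rel pf q) :
    Nonempty (fiberSquare i (relations ρ pf p) ≃* fiberSquare i (collapse K ι)) ↔
      Relation.ReflTransGen (fun q q' => ∃ i, (ρ i).Rel q q') p pf := by
  refine ⟨fun h => ?_, fun h => ?_⟩
  · by_contra hp
    exact not_nonempty_fiberSquare_mulEquiv hi exists_not_commute_relations
      exists_not_commute_collapse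
      ⟨marker K ι, Subgroup.subset_normalClosure (.inl (.inl (.inr (.inl rfl)))),
        marker_notMem_relations hdet hterm hp⟩ (fun _ => mem_collapse_of_sq_mem) h
  · have : fiberSquare i (relations ρ pf p) = fiberSquare i (collapse K ι) := by
      simp only [relations_eq_collapse h]
    rw [this]
    exact ⟨MulEquiv.refl _⟩

end Letter

end Dichotomy

section Machine

open Multiplicative (ofAdd toAdd)
open Turing Turing.TM2 Turing.TM2.Stmt
open Turing.PartrecToTM2 (Γ')
open Function (update)

/-- The configuration with given control state and registers. -/
def ConfigGroup.point {K : Type} (a : ℤ) (z : K → ℤ) : ConfigGroup K := fun o => ofAdd (o.elim a z)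

theorem AffineRule.Rel.eq {K : Type} {ρ : AffineRule K} {p p' p'' : ConfigGroup K}
    (h' : ρ.Rel p p') (h'' : ρ.Rel p p'') : p' = p'' := by
  obtain ⟨b, rfl, rfl⟩ := h'
  obtain ⟨b', h, rfl⟩ := h''
  rw [scaleHom_injective ρ.sourceScale_ne (mul_left_cancel h)]

theorem AffineRule.Rel.apply_none {K : Type} {ρ : AffineRule K} {p p' : ConfigGroup K}
    (h : ρ.Rel p p') : p none = ρ.source none := by
  obtain ⟨b, rfl, rfl⟩ := h
  exact mul_one _

theorem AffineRule.Rel.exists_apply_some {K : Type} {ρ : AffineRule K} {p p' : ConfigGroup K}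
    (h : ρ.Rel p p') (k : K) :
    ∃ b : ℤ, toAdd (p (some k)) = toAdd (ρ.source (some k)) + ρ.sourceScale k * b := by
  obtain ⟨b, rfl, rfl⟩ := h
  exact ⟨toAdd (b k), by simp [scaleHom]⟩

/-- The rule replacing `o + m * b` by `o' + m' * b` in one register and changing the control
state. -/
def AffineRule.register {K : Type} [DecidableEq K] (k : K) (a a' o m o' m' : ℤ) (hm : m ≠ 0)
    (hm' : m' ≠ 0) : AffineRule K where
  source := .point a (update 0 k o)
  target := .point a' (update 0 k o')
  sourceScale := update 1 k m
  targetScale := update 1 k m'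
  sourceScale_ne j := by rcases eq_or_ne j k with rfl | h <;> simp [*]
  targetScale_ne j := by rcases eq_or_ne j k with rfl | h <;> simp [*]

theorem ConfigGroup.point_update_mul_scaleHom {K : Type} [DecidableEq K] (k : K) (a o m : ℤ)
    (b : K → ℤ) : point a (update 0 k o) * scaleHom (update 1 k m) (fun j => ofAdd (b j)) =
      point a (update b k (o + m * b k)) := by
  funext x
  cases x with
  | none => simp [point, scaleHom]
  | some j =>
    rcases eq_or_ne j k with rfl | h
    · refine Multiplicative.toAdd.injective ?_
      simp [point, scaleHom, mul_comm]
    · simp [point, scaleHom, h]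

theorem AffineRule.register_rel_iff {K : Type} [DecidableEq K] {k : K} {a a' o m o' m' : ℤ}
    {hm : m ≠ 0} {hm' : m' ≠ 0} {p p' : ConfigGroup K} :
    (register k a a' o m o' m' hm hm').Rel p p' ↔ ∃ b : K → ℤ,
      p = .point a (update b k (o + m * b k)) ∧ p' = .point a' (update b k (o' + m' * b k)) := by
  constructor
  · rintro ⟨b, rfl, rfl⟩
    exact ⟨fun j => toAdd (b j), ConfigGroup.point_update_mul_scaleHom ..,
      ConfigGroup.point_update_mul_scaleHom ..⟩
  · rintro ⟨b, rfl, rfl⟩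
    exact ⟨fun j => ofAdd (b j), (ConfigGroup.point_update_mul_scaleHom ..).symm,
      (ConfigGroup.point_update_mul_scaleHom ..).symm⟩

theorem AffineRule.register_rel {K : Type} [DecidableEq K] {k : K} {a a' o m o' m' : ℤ}
    {hm : m ≠ 0} {hm' : m' ≠ 0} {z : K → ℤ} (b : ℤ) (hb : z k = o + m * b) :
    (register k a a' o m o' m' hm hm').Rel (.point a z)
      (.point a' (update z k (o' + m' * b))) := by
  refine register_rel_iff.2 ⟨update z k b, ?_, ?_⟩ <;> simp [← hb]

/-- The digit of the possible heads of a stack. -/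
def headDigit : Option Γ' → ℤ
  | none => 0
  | some .consₗ => 1
  | some .cons => 2
  | some .bit0 => 3
  | some .bit1 => 4

theorem eq_of_headDigit_modEq {d d' : Option Γ'} (h : headDigit d ≡ headDigit d' [ZMOD 5]) :
    d = d' := by
  rcases d with _ | _ | _ | _ | _ <;> rcases d' with _ | _ | _ | _ | _ <;>
    first | rfl | exact absurd h (by decide)

/-- The integer whose digits in base five are the letters of a stack. -/
def stackValue : List Γ' → ℤ
  | [] => 0
  | x :: l => headDigit (some x) + 5 * stackValue l

theorem stackValue_eq_head_add_tail (l : List Γ') :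
    stackValue l = headDigit l.head? + 5 * stackValue l.tail := by
  cases l <;> simp [stackValue, headDigit]

variable {K Λ σ : Type} [DecidableEq K]

theorem stackValue_update (S : K → List Γ') (k : K) (l : List Γ') :
    (fun j => stackValue (update S k l j)) =
      update (fun j => stackValue (S j)) k (stackValue l) := by
  funext j
  exact Function.apply_update (fun _ => stackValue) S k l j

/-- The configuration attached to a statement about to be executed. -/
def stmtConfig (e : Stmt (fun _ : K => Γ') Λ σ × σ → ℕ) (q : Stmt (fun _ : K => Γ') Λ σ) (v : σ)
    (S : K → List Γ') : ConfigGroup K :=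
  .point (e (q, v)) fun k => stackValue (S k)

/-- The situation after the head of a statement has been executed. -/
def stmtNext (M : Λ → Stmt (fun _ : K => Γ') Λ σ) :
    Stmt (fun _ : K => Γ') Λ σ → σ → (K → List Γ') →
      Stmt (fun _ : K => Γ') Λ σ × σ × (K → List Γ')
  | push k f q, v, S => (q, v, update S k (f v :: S k))
  | peek k f q, v, S => (q, f v (S k).head?, S)
  | pop k f q, v, S => (q, f v (S k).head?, update S k (S k).tail)
  | load f q, v, S => (q, f v, S)
  | branch f q₁ q₂, v, S => (bif f v then q₁ else q₂, v, S)
  | goto f, v, S => (M (f v), v, S)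
  | halt, v, S => (halt, v, S)

theorem reaches_stepAux_stmtNext (M : Λ → Stmt (fun _ : K => Γ') Λ σ)
    (q : Stmt (fun _ : K => Γ') Λ σ) (v : σ) (S : K → List Γ') :
    StateTransition.Reaches (step M) (stepAux q v S)
      (stepAux (stmtNext M q v S).1 (stmtNext M q v S).2.1 (stmtNext M q v S).2.2) := by
  cases q with
  | goto f => exact .single rfl
  | branch f q₁ q₂ =>
    simp only [stmtNext, stepAux]
    cases f v <;> exact .refl
  | _ => exact .refl

theorem elim_stepAux_mem {M : Λ → Stmt (fun _ : K => Γ') Λ σ} {Q : Set (Stmt (fun _ : K => Γ') Λ σ)}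
    (hQ : ∀ q ∈ Q, ∀ v S, (stmtNext M q v S).1 ∈ Q) {q : Stmt (fun _ : K => Γ') Λ σ} (hq : q ∈ Q)
    (v : σ) (S : K → List Γ') : (stepAux q v S).l.elim halt M ∈ Q := by
  induction q generalizing v S with
  | goto f => exact hQ _ hq v S
  | halt => exact hq
  | branch f q₁ q₂ ih₁ ih₂ =>
    have := hQ _ hq v S
    simp only [stmtNext, stepAux] at this ⊢
    cases hf : f v <;> rw [hf] at this
    · exact ih₂ this _ _
    · exact ih₁ this _ _
  | _ => rename_i ih; exact ih (hQ _ hq v S) _ _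

theorem exists_finite_stmtNext_mem [Inhabited Λ] {M : Λ → Stmt (fun _ : K => Γ') Λ σ}
    {A : Finset Λ} (hA : Supports M A) :
    ∃ Q : Set (Stmt (fun _ : K => Γ') Λ σ), Q.Finite ∧ halt ∈ Q ∧ (∀ l ∈ A, M l ∈ Q) ∧
      ∀ q ∈ Q, ∀ v S, (stmtNext M q v S).1 ∈ Q := by
  have hM : ∀ l ∈ A, some (M l) ∈ stmts M A := fun l hl => by
    simpa [stmts] using ⟨l, hl, stmts₁_self⟩
  refine ⟨insert halt (some ⁻¹' (stmts M A : Set (Option (Stmt (fun _ : K => Γ') Λ σ)))),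
    (Set.Finite.preimage (Option.some_injective _).injOn (Finset.finite_toSet _)).insert _,
    Set.mem_insert .., fun l hl => .inr (hM l hl), ?_⟩
  rintro q (rfl | hq) v S
  · exact .inl rfl
  have hsub : ∀ {q'}, q' ∈ stmts₁ q → q' ∈ insert halt (some ⁻¹' (stmts M A : Set (Option _))) :=
    fun h => .inr (stmts_trans h hq)
  cases q with
  | goto f => exact .inr (hM _ (stmts_supportsStmt hA hq v))
  | halt => exact .inl rfl
  | branch f q₁ q₂ =>
    refine hsub ?_
    simp only [stmtNext]
    cases f v <;> simp [stmts₁, stmts₁_self]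
  | _ => exact hsub (by simp [stmtNext, stmts₁, stmts₁_self])

variable [Inhabited K]

/-- The rule which executes the head of a statement, given the internal state and the possible
head of the stack involved. -/
def stmtRule (M : Λ → Stmt (fun _ : K => Γ') Λ σ) (e : Stmt (fun _ : K => Γ') Λ σ × σ → ℕ) :
    Stmt (fun _ : K => Γ') Λ σ → σ → Option Γ' → AffineRule K
  | push k f q, v, _ => .register k (e (push k f q, v)) (e (q, v)) 0 1
      (headDigit (some (f v))) 5 one_ne_zero (by decide)
  | peek k f q, v, d => .register k (e (peek k f q, v)) (e (q, f v d)) (headDigit d) 5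
      (headDigit d) 5 (by decide) (by decide)
  | pop k f q, v, d => .register k (e (pop k f q, v)) (e (q, f v d)) (headDigit d) 5
      0 (bif d.isSome then 1 else 5) (by decide) (by cases d <;> simp)
  | load f q, v, _ => .register default (e (load f q, v)) (e (q, f v)) 0 1 0 1
      one_ne_zero one_ne_zero
  | branch f q₁ q₂, v, _ => .register default (e (branch f q₁ q₂, v))
      (e (bif f v then q₁ else q₂, v)) 0 1 0 1 one_ne_zero one_ne_zero
  | goto f, v, _ => .register default (e (goto f, v)) (e (M (f v), v)) 0 1 0 1
      one_ne_zero one_ne_zero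
  | halt, v, _ => .register default (e (halt, v)) (e (halt, v)) 0 1 0 1 one_ne_zero one_ne_zero

variable {M : Λ → Stmt (fun _ : K => Γ') Λ σ} {e : Stmt (fun _ : K => Γ') Λ σ × σ → ℕ}

theorem stmtRule_rel_stmtNext (q : Stmt (fun _ : K => Γ') Λ σ) (v : σ) (S : K → List Γ') :
    ∃ d, (stmtRule M e q v d).Rel (stmtConfig e q v S)
      (stmtConfig e (stmtNext M q v S).1 (stmtNext M q v S).2.1 (stmtNext M q v S).2.2) := by
  have hid : ∀ a a', (AffineRule.register default a a' 0 1 0 1 one_ne_zero one_ne_zero).Rel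
      (.point a fun k => stackValue (S k)) (.point a' fun k => stackValue (S k)) := by
    intro a a'
    have := AffineRule.register_rel (k := default) (a := a) (a' := a') (o := 0) (o' := 0) (m := 1)
      (m' := 1) (hm := one_ne_zero) (hm' := one_ne_zero) (z := fun k => stackValue (S k))
      (stackValue (S default)) (by simp)
    simpa using this
  cases q with
  | push k f q =>
    refine ⟨none, ?_⟩
    simp only [stmtConfig, stmtNext, stackValue_update]
    exact AffineRule.register_rel (hm := one_ne_zero) (hm' := by decide) (stackValue (S k))
      (by simp)
  | peek k f q =>
    refine ⟨(S k).head?, ?_⟩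
    have := AffineRule.register_rel (k := k) (a := e (peek k f q, v))
      (a' := e (q, f v (S k).head?)) (o := headDigit (S k).head?) (o' := headDigit (S k).head?)
      (m := 5) (m' := 5) (hm := by decide) (hm' := by decide) (z := fun k => stackValue (S k))
      (stackValue (S k).tail) (stackValue_eq_head_add_tail _)
    rwa [← stackValue_eq_head_add_tail, Function.update_eq_self_iff.2 rfl] at this
  | pop k f q =>
    refine ⟨(S k).head?, ?_⟩
    simp only [stmtConfig, stmtNext, stackValue_update]
    have : stackValue (S k).tail =
        0 + (bif (S k).head?.isSome then 1 else 5) * stackValue (S k).tail := by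
      cases S k <;> simp [stackValue]
    rw [this]
    exact AffineRule.register_rel (hm := by decide) (hm' := by cases (S k).head? <;> simp)
      (stackValue (S k).tail) (stackValue_eq_head_add_tail _)
  | load f q => exact ⟨none, hid _ _⟩
  | branch f q₁ q₂ => exact ⟨none, hid _ _⟩
  | goto f => exact ⟨none, hid _ _⟩
  | halt => exact ⟨none, hid _ _⟩

theorem apply_none_of_stmtRule_rel {q : Stmt (fun _ : K => Γ') Λ σ} {v : σ} {d : Option Γ'}
    {p p' : ConfigGroup K} (h : (stmtRule M e q v d).Rel p p') :
    p none = ofAdd (e (q, v) : ℤ) := by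
  rw [h.apply_none]
  cases q <;> rfl

theorem eq_of_stmtRule_rel {q : Stmt (fun _ : K => Γ') Λ σ} {v : σ} {d d' : Option Γ'}
    {p p' p'' : ConfigGroup K} (hd : (stmtRule M e q v d).Rel p p')
    (hd' : (stmtRule M e q v d').Rel p p'') : p' = p'' := by
  have hdigit : ∀ k, (∀ d, (stmtRule M e q v d).source (some k) = ofAdd (headDigit d)) →
      (∀ d, (stmtRule M e q v d).sourceScale k = 5) → d = d' := by
    intro k hsource hscale
    obtain ⟨b, hb⟩ := hd.exists_apply_some k
    obtain ⟨b', hb'⟩ := hd'.exists_apply_some k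
    rw [hsource, hscale, toAdd_ofAdd] at hb hb'
    refine eq_of_headDigit_modEq (Int.modEq_iff_dvd.2 ⟨b - b', ?_⟩)
    linarith
  cases q with
  | peek k f q =>
    obtain rfl := hdigit k (by simp [stmtRule, AffineRule.register, ConfigGroup.point])
      (by simp [stmtRule, AffineRule.register])
    exact hd.eq hd'
  | pop k f q =>
    obtain rfl := hdigit k (by simp [stmtRule, AffineRule.register, ConfigGroup.point])
      (by simp [stmtRule, AffineRule.register])
    exact hd.eq hd'
  | _ => exact AffineRule.Rel.eq hd hd'

/-- The rules executing the statements of a given set. -/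
def machineRules (M : Λ → Stmt (fun _ : K => Γ') Λ σ) (e : Stmt (fun _ : K => Γ') Λ σ × σ → ℕ)
    (Q : Set (Stmt (fun _ : K => Γ') Λ σ)) : Set (AffineRule K) :=
  {ρ | ∃ q ∈ Q, q ≠ halt ∧ ∃ v d, ρ = stmtRule M e q v d}

/-- One step of the affine system attached to a machine. -/
def MachineStep (M : Λ → Stmt (fun _ : K => Γ') Λ σ) (e : Stmt (fun _ : K => Γ') Λ σ × σ → ℕ)
    (Q : Set (Stmt (fun _ : K => Γ') Λ σ)) (p p' : ConfigGroup K) : Prop :=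
  ∃ ρ : machineRules M e Q, ρ.1.Rel p p'

variable {Q : Set (Stmt (fun _ : K => Γ') Λ σ)}

theorem finite_machineRules [Finite σ] (hQ : Q.Finite) : (machineRules M e Q).Finite := by
  have : machineRules M e Q ⊆ (fun x : Stmt (fun _ : K => Γ') Λ σ × σ × Option Γ' =>
      stmtRule M e x.1 x.2.1 x.2.2) '' (Q ×ˢ Set.univ) := by
    rintro _ ⟨q, hq, -, v, d, rfl⟩
    exact ⟨(q, v, d), ⟨hq, trivial⟩, rfl⟩
  exact ((hQ.prod Set.finite_univ).image _).subset this

theorem MachineStep.eq (he : Set.InjOn e (Q ×ˢ Set.univ)) {p p' p'' : ConfigGroup K}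
    (h' : MachineStep M e Q p p') (h'' : MachineStep M e Q p p'') : p' = p'' := by
  obtain ⟨⟨_, q, hq, _, v, d, rfl⟩, hd⟩ := h'
  obtain ⟨⟨_, q', hq', _, v', d', rfl⟩, hd'⟩ := h''
  have : (e (q, v) : ℤ) = e (q', v') := ofAdd.injective
    ((apply_none_of_stmtRule_rel hd).symm.trans (apply_none_of_stmtRule_rel hd'))
  obtain ⟨rfl, rfl⟩ := Prod.ext_iff.1 (he ⟨hq, trivial⟩ ⟨hq', trivial⟩ (Int.ofNat_inj.1 this))
  exact eq_of_stmtRule_rel hd hd'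

theorem not_machineStep_halt (he : Set.InjOn e (Q ×ˢ Set.univ)) (hhalt : halt ∈ Q) {v : σ}
    {S : K → List Γ'} {p : ConfigGroup K} : ¬ MachineStep M e Q (stmtConfig e halt v S) p := by
  rintro ⟨⟨_, q, hq, hne, v', d, rfl⟩, h⟩
  have : (e (halt, v) : ℤ) = e (q, v') := ofAdd.injective (apply_none_of_stmtRule_rel h)
  exact hne (Prod.ext_iff.1 (he ⟨hhalt, trivial⟩ ⟨hq, trivial⟩ (Int.ofNat_inj.1 this))).1.symm

theorem machineStep_stmtNext {q : Stmt (fun _ : K => Γ') Λ σ} (hq : q ∈ Q) (hne : q ≠ halt) (v : σ)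
    (S : K → List Γ') : MachineStep M e Q (stmtConfig e q v S)
      (stmtConfig e (stmtNext M q v S).1 (stmtNext M q v S).2.1 (stmtNext M q v S).2.2) :=
  let ⟨d, hd⟩ := stmtRule_rel_stmtNext q v S
  ⟨⟨_, q, hq, hne, v, d, rfl⟩, hd⟩

/-- The configuration attached to a configuration of a machine. -/
def cfgConfig (M : Λ → Stmt (fun _ : K => Γ') Λ σ) (e : Stmt (fun _ : K => Γ') Λ σ × σ → ℕ)
    (c : Cfg (fun _ : K => Γ') Λ σ) : ConfigGroup K :=
  stmtConfig e (c.l.elim halt M) c.var c.stk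

theorem reflTransGen_machineStep_stepAux
    (hQ : ∀ q ∈ Q, ∀ v S, (stmtNext M q v S).1 ∈ Q) {q : Stmt (fun _ : K => Γ') Λ σ} (hq : q ∈ Q)
    (v : σ) (S : K → List Γ') : Relation.ReflTransGen (MachineStep M e Q) (stmtConfig e q v S)
      (cfgConfig M e (stepAux q v S)) := by
  induction q generalizing v S with
  | push k f q ih =>
    exact .head (machineStep_stmtNext hq (by simp) v S) (ih (hQ _ hq v S) _ _)
  | peek k f q ih =>
    exact .head (machineStep_stmtNext hq (by simp) v S) (ih (hQ _ hq v S) _ _)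
  | pop k f q ih =>
    exact .head (machineStep_stmtNext hq (by simp) v S) (ih (hQ _ hq v S) _ _)
  | load f q ih =>
    exact .head (machineStep_stmtNext hq (by simp) v S) (ih (hQ _ hq v S) _ _)
  | branch f q₁ q₂ ih₁ ih₂ =>
    refine .head (machineStep_stmtNext hq (by simp) v S) ?_
    have := hQ _ hq v S
    simp only [stmtNext, stepAux] at this ⊢
    cases hf : f v <;> rw [hf] at this
    · exact ih₂ this _ _
    · exact ih₁ this _ _
  | goto f => exact .single (machineStep_stmtNext hq (by simp) v S)
  | halt => exact .refl

theorem reflTransGen_machineStep_of_reaches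
    (hQ : ∀ q ∈ Q, ∀ v S, (stmtNext M q v S).1 ∈ Q) {c c' : Cfg (fun _ : K => Γ') Λ σ}
    (h : StateTransition.Reaches (step M) c c') (hc : c.l.elim halt M ∈ Q) :
    Relation.ReflTransGen (MachineStep M e Q) (cfgConfig M e c) (cfgConfig M e c') := by
  induction h using Relation.ReflTransGen.head_induction_on with
  | refl => exact .refl
  | @head c c₁ hstep _ ih =>
    obtain ⟨l, v, S⟩ := c
    cases l with
    | none => simp at hstep
    | some l =>
      simp only [step, Option.mem_def, Option.some.injEq] at hstep
      subst hstep
      exact .trans (reflTransGen_machineStep_stepAux hQ hc v S) (ih (elim_stepAux_mem hQ hc v S))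

theorem exists_reaches_of_reflTransGen (he : Set.InjOn e (Q ×ˢ Set.univ)) (hhalt : halt ∈ Q)
    (hQ : ∀ q ∈ Q, ∀ v S, (stmtNext M q v S).1 ∈ Q) {v' : σ} {S' : K → List Γ'}
    {p : ConfigGroup K}
    (h : Relation.ReflTransGen (MachineStep M e Q) p (stmtConfig e halt v' S')) :
    ∀ q ∈ Q, ∀ v S, p = stmtConfig e q v S →
      ∃ c, StateTransition.Reaches (step M) (stepAux q v S) c ∧ step M c = none := by
  induction h using Relation.ReflTransGen.head_induction_on with
  | refl =>
    intro q hq v S hp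
    have : (e (halt, v') : ℤ) = e (q, v) := ofAdd.injective (congrFun hp none)
    obtain ⟨rfl, -⟩ := Prod.ext_iff.1 (he ⟨hhalt, trivial⟩ ⟨hq, trivial⟩ (Int.ofNat_inj.1 this))
    exact ⟨_, .refl, rfl⟩
  | head hstep _ ih =>
    rintro q hq v S rfl
    by_cases hne : q = halt
    · subst hne
      exact ⟨_, .refl, rfl⟩
    · obtain ⟨c, hc, hc'⟩ := ih _ (hQ q hq v S) _ _
        (hstep.eq he (machineStep_stmtNext hq hne v S))
      exact ⟨c, (reaches_stepAux_stmtNext M q v S).trans hc, hc'⟩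

theorem dom_eval_of_reflTransGen (he : Set.InjOn e (Q ×ˢ Set.univ)) (hhalt : halt ∈ Q)
    (hQ : ∀ q ∈ Q, ∀ v S, (stmtNext M q v S).1 ∈ Q) {l : Λ} (hl : M l ∈ Q) {v v' : σ}
    {S S' : K → List Γ'} (h : Relation.ReflTransGen (MachineStep M e Q)
      (cfgConfig M e ⟨some l, v, S⟩) (stmtConfig e halt v' S')) :
    (StateTransition.eval (step M) ⟨some l, v, S⟩).Dom := by
  obtain ⟨c, hc, hc'⟩ := exists_reaches_of_reflTransGen he hhalt hQ h _ hl v S rfl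
  exact Part.dom_iff_mem.2 ⟨c, StateTransition.mem_eval.2 ⟨.head rfl hc, hc'⟩⟩

end Machine

section Halting

open Multiplicative (ofAdd toAdd)
open Turing.PartrecToTM2 (Γ' K' trList)
open Turing.ToPartrec (Code)

theorem exists_affineRule_reachability (c : Code) :
    ∃ (ι : Type) (_ : Finite ι) (ρ : ι → AffineRule K') (pf : ConfigGroup K') (a : ℕ),
      (∀ i j q q' q'', (ρ i).Rel q q' → (ρ j).Rel q q'' → q' = q'') ∧
      (∀ i q, ¬ (ρ i).Rel pf q) ∧
      ∀ v, (∀ w ∈ c.eval v, w = [0]) →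
        (Relation.ReflTransGen (fun q q' => ∃ i, (ρ i).Rel q q')
          (.point a fun k => stackValue (K'.elim (trList v) [] [] [] k)) pf ↔ (c.eval v).Dom) := by
  open Turing.PartrecToTM2 in
  let l₀ := trNormal c Cont'.halt
  let _ : Inhabited Λ' := ⟨l₀⟩
  have hA := tr_supports c Cont'.halt
  obtain ⟨Q, hfin, hhalt, hAQ, hQ⟩ := exists_finite_stmtNext_mem hA
  obtain ⟨e, he⟩ := Set.countable_iff_exists_injOn.1
    (hfin.prod (Set.finite_univ (α := Option Γ'))).countable
  refine ⟨machineRules tr e Q, finite_machineRules hfin, fun ρ => ρ.1,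
    cfgConfig tr e (halt [0]), e (tr l₀, none), ?_, ?_, ?_⟩
  · exact fun i j q q' q'' h' h'' => MachineStep.eq he ⟨i, h'⟩ ⟨j, h''⟩
  · exact fun i q h => not_machineStep_halt he hhalt ⟨i, h⟩
  intro v hv
  have hl : tr l₀ ∈ Q := hAQ _ hA.1
  have heval := tr_eval c v
  constructor
  · intro h
    have := dom_eval_of_reflTransGen (M := tr) he hhalt hQ hl (v := none)
      (S := K'.elim (trList v) [] [] []) h
    change (StateTransition.eval (Turing.TM2.step tr) (init c v)).Dom at this
    rwa [heval] at this
  · intro h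
    obtain ⟨w, hw⟩ := Part.dom_iff_mem.1 h
    obtain rfl := hv w hw
    have : halt [0] ∈ StateTransition.eval (Turing.TM2.step tr) (init c v) := by
      rw [heval]
      exact Part.mem_map _ hw
    exact reflTransGen_machineStep_of_reaches hQ (StateTransition.mem_eval.1 this).1 hl

/-- The positive number whose `n + 1` binary digits are all one. -/
def onesNum (n : ℕ) : PosNum := n.rec .one fun _ => .bit1

/-- The stack holding the number `onesNum n`, as an integer. -/
def onesValue (n : ℕ) : ℕ := n.rec 14 fun _ x => 4 + 5 * x

theorem computable_onesValue : Computable onesValue := by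
  have : Primrec onesValue := Primrec.nat_rec₁ 14
    (Primrec.nat_add.comp₂ (Primrec₂.const 4)
      (Primrec.nat_mul.comp₂ (Primrec₂.const 5) Primrec₂.right))
  exact this.to_comp

theorem computable_cast_onesNum : Computable fun n => (onesNum n : ℕ) := by
  have : Primrec fun n : ℕ => (n.rec 1 fun _ x => x + x + 1 : ℕ) := Primrec.nat_rec₁ 1
    (Primrec.succ.comp₂ (Primrec.nat_add.comp₂ Primrec₂.right Primrec₂.right))
  refine this.to_comp.of_eq fun n => ?_
  induction n with
  | zero => rfl
  | succ n ih => exact congrArg (fun x => x + x + 1) ih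

theorem cast_onesNum_injective : Function.Injective fun n => (onesNum n : ℕ) := by
  refine (strictMono_nat_of_lt_succ fun n => ?_).injective
  change _ < (onesNum n : ℕ) + (onesNum n : ℕ) + 1
  omega

theorem stackValue_trList_onesNum (n : ℕ) :
    stackValue (trList [(onesNum n : ℕ)]) = onesValue n := by
  have : trList [(onesNum n : ℕ)] = Turing.PartrecToTM2.trPosNum (onesNum n) ++ [Γ'.cons] := by
    have : (((onesNum n : ℕ)) : Num) = Num.pos (onesNum n) := by
      simp
    rw [trList, Turing.PartrecToTM2.trNat, this]
    rfl
  rw [this]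
  clear this
  induction n with
  | zero => rfl
  | succ n ih =>
    change 4 + 5 * stackValue (Turing.PartrecToTM2.trPosNum (onesNum n) ++ [Γ'.cons]) =
      ((4 + 5 * onesValue n : ℕ) : ℤ)
    rw [ih]
    push_cast
    rfl

theorem exists_code_halting : ∃ c : Code, ∀ n, (∀ w ∈ c.eval [(onesNum n : ℕ)], w = [0]) ∧
    ((c.eval [(onesNum n : ℕ)]).Dom ↔ (Nat.Partrec.Code.eval (.ofNatCode n) 0).Dom) := by
  let f : ℕ →. ℕ := fun x =>
    (Nat.rfind fun m => Part.some (decide ((onesNum m : ℕ) = x))).bind fun m =>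
      (Nat.Partrec.Code.eval (.ofNatCode m) 0).map fun _ => 0
  have hf : Partrec f := by
    refine Partrec.bind (Partrec.rfind ?_) (Partrec.map ?_ (Computable.const 0).to₂)
    · exact Computable₂.partrec₂ (Primrec.eq.decide.to_comp.comp
        (computable_cast_onesNum.comp Computable.snd) Computable.fst)
    · exact Nat.Partrec.Code.eval_part.comp ((Computable.ofNat _).comp Computable.snd)
        (Computable.const 0)
  have hdom : ∀ n, f (onesNum n : ℕ) = (Nat.Partrec.Code.eval (.ofNatCode n) 0).map fun _ => 0 := by
    intro n
    have : n ∈ Nat.rfind fun m => Part.some (decide ((onesNum m : ℕ) = onesNum n)) := by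
      refine Nat.mem_rfind.2 ⟨by simp, fun {m} hm => ?_⟩
      simpa using fun h => hm.ne (cast_onesNum_injective h)
    simp only [f, Part.eq_some_iff.2 this, Part.bind_some]
  obtain ⟨c, hc⟩ := Code.exists_code (Nat.Partrec'.part_iff₁.2 hf)
  refine ⟨c, fun n => ?_⟩
  have := hc ⟨[(onesNum n : ℕ)], rfl⟩
  change c.eval [(onesNum n : ℕ)] = pure <$> f (onesNum n : ℕ) at this
  rw [this, hdom]
  constructor
  · rintro w hw
    obtain ⟨x, hx, rfl⟩ := (Part.mem_map_iff _).1 hw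
    obtain ⟨y, -, rfl⟩ := (Part.mem_map_iff _).1 hx
    rfl
  · exact Iff.rfl

theorem exists_affineRule_undecidable_reachability :
    ∃ (K : Type) (_ : Fintype K) (_ : Nonempty K) (ι : Type) (_ : Finite ι)
      (ρ : ι → AffineRule K) (pf : ConfigGroup K) (p : ℕ → ConfigGroup K),
      (∀ i j q q' q'', (ρ i).Rel q q' → (ρ j).Rel q q'' → q' = q'') ∧
      (∀ i q, ¬ (ρ i).Rel pf q) ∧
      (∀ o, ∃ c : ℕ → ℕ, Computable c ∧ ∀ n, p n o = ofAdd (c n : ℤ)) ∧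
      ¬ ComputablePred fun n =>
        Relation.ReflTransGen (fun q q' => ∃ i, (ρ i).Rel q q') (p n) pf := by
  obtain ⟨c, hc⟩ := exists_code_halting
  obtain ⟨ι, hι, ρ, pf, a, hdet, hterm, h⟩ := exists_affineRule_reachability c
  refine ⟨K', ⟨{.main, .rev, .aux, .stack}, by rintro (_ | _ | _ | _) <;> simp⟩, inferInstance,
    ι, hι, ρ, pf,
    fun n => .point a fun k => stackValue (K'.elim (trList [(onesNum n : ℕ)]) [] [] [] k),
    hdet, hterm, ?_, ?_⟩
  · rintro (_ | _ | _ | _ | _)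
    · exact ⟨fun _ => a, Computable.const a, fun n => rfl⟩
    · exact ⟨onesValue, computable_onesValue, fun n => congrArg ofAdd (stackValue_trList_onesNum n)⟩
    all_goals exact ⟨fun _ => 0, Computable.const 0, fun n => rfl⟩
  · intro hcomp
    refine ComputablePred.halting_problem 0 ?_
    refine ComputablePred.computable_of_manyOneReducible
      ⟨Encodable.encode, Computable.encode, fun d => ?_⟩ hcomp
    rw [h _ (hc _).1, (hc _).2]
    simp [← Nat.Partrec.Code.ofNatCode_eq]

end Halting

section Generators

/-- Sequences of elements of the free group represented by a computable sequence of words. -/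
def ComputableFamily (g : ℕ → FreeGroup Bool) : Prop :=
  ∃ w : ℕ → Word2, Computable w ∧ ∀ n, FreeGroup.mk (w n) = g n

namespace ComputableFamily

variable {g h : ℕ → FreeGroup Bool}

theorem const (x : FreeGroup Bool) : ComputableFamily fun _ => x :=
  ⟨fun _ => x.toWord, Computable.const _, fun _ => FreeGroup.mk_toWord⟩

theorem mul (hg : ComputableFamily g) (hh : ComputableFamily h) :
    ComputableFamily fun n => g n * h n := by
  obtain ⟨u, hu, hu'⟩ := hg
  obtain ⟨v, hv, hv'⟩ := hh
  exact ⟨fun n => u n ++ v n, Computable.list_append.comp hu hv, fun n => by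
    simp only [← hu', ← hv', FreeGroup.mul_mk]⟩

theorem inv (hg : ComputableFamily g) : ComputableFamily fun n => (g n)⁻¹ := by
  obtain ⟨u, hu, hu'⟩ := hg
  have hneg : Primrec fun x : Bool × Bool => (x.1, !x.2) :=
    Primrec.fst.pair (Primrec.not.comp Primrec.snd)
  have hrev : Primrec fun w : Word2 => FreeGroup.invRev w :=
    Primrec.list_reverse.comp (Primrec.list_map Primrec.id (hneg.comp Primrec.snd).to₂)
  exact ⟨fun n => FreeGroup.invRev (u n), hrev.to_comp.comp hu, fun n => by
    simp only [← hu', FreeGroup.inv_mk]⟩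

theorem pow (x : FreeGroup Bool) {c : ℕ → ℕ} (hc : Computable c) :
    ComputableFamily fun n => x ^ c n := by
  have hw : Primrec fun n : ℕ => (n.rec [] fun _ w => x.toWord ++ w : Word2) :=
    Primrec.nat_rec₁ [] (Primrec.list_append.comp₂ (Primrec₂.const _) Primrec₂.right)
  refine ⟨_, hw.to_comp.comp hc, fun n => ?_⟩
  beta_reduce
  generalize c n = m
  induction m with
  | zero => rfl
  | succ m ih => rw [pow_succ', ← ih, ← FreeGroup.mul_mk, FreeGroup.mk_toWord]

theorem list_prod {α : Type*} (l : List α) {g : α → ℕ → FreeGroup Bool}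
    (hg : ∀ a, ComputableFamily (g a)) : ComputableFamily fun n => (l.map fun a => g a n).prod := by
  induction l with
  | nil => exact const 1
  | cons a l ih => simpa using (hg a).mul ih

end ComputableFamily

theorem exists_computable_pairsSubgroup_eq {α : Type*} [Finite α] {g h : α → ℕ → FreeGroup Bool}
    (hg : ∀ a, ComputableFamily (g a)) (hh : ∀ a, ComputableFamily (h a)) :
    ∃ S : ℕ → List (Word2 × Word2), Computable S ∧
      ∀ n, pairsSubgroup (S n) = Subgroup.closure (Set.range fun a => (g a n, h a n)) := by
  choose u hu hu' using hg
  choose v hv hv' using hh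
  have := Fintype.ofFinite α
  refine ⟨fun n => (Finset.univ : Finset α).toList.map fun a => (u a n, v a n), ?_, fun n => ?_⟩
  · generalize (Finset.univ : Finset α).toList = l
    induction l with
    | nil => exact Computable.const _
    | cons a l ih => exact Computable.list_cons.comp ((hu a).pair (hv a)) ih
  · rw [pairsSubgroup]
    congr 1
    ext p
    simp [hu', hv', eq_comm]

open scoped commutatorElement in
theorem Letter.computableFamily_killRelator {K ι : Type} [Fintype K]
    (i : FreeGroup (Letter K ι) →* FreeGroup Bool) {p : ℕ → ConfigGroup K}
    (hp : ∀ o, ∃ c : ℕ → ℕ, Computable c ∧ ∀ n, p n o = Multiplicative.ofAdd (c n : ℤ))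
    (o : Option (BaseLetter K ι)) : ComputableFamily fun n => i (killRelator (p n) o) := by
  have hword : ComputableFamily fun n => i (word (p n)) := by
    choose c hc hpc using hp
    have := ComputableFamily.list_prod (Finset.univ : Finset (Option K)).toList
      fun o => ComputableFamily.pow (i (coord o)) (hc o)
    simpa [word, hpc, map_list_prod, Function.comp_def] using this
  have hmarker : ComputableFamily fun n => i (markerAt (p n)) := by
    simpa [markerAt] using (hword.mul (.const (i (marker K ι)))).mul hword.inv
  have hdetector : ComputableFamily fun n => ⁅i (detector K ι), i (markerAt (p n))⁆ := by
    simpa [commutatorElement_def] using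
      (((ComputableFamily.const (i (detector K ι))).mul hmarker).mul (.const _)).mul hmarker.inv
  simpa [killRelator, map_commutatorElement] using
    (((ComputableFamily.const (i (conjugator o))).mul hdetector).mul (.const _)).mul
      (.const (i (base o * adjoined K ι))⁻¹)

theorem exists_computable_pairsSubgroup_eq_fiberSquare {L α : Type*} [Finite L] [Finite α]
    (i : FreeGroup L →* FreeGroup Bool) {r : α → ℕ → FreeGroup L}
    (hr : ∀ a, ComputableFamily fun n => i (r a n)) :
    ∃ S : ℕ → List (Word2 × Word2), Computable S ∧ ∀ n,
      pairsSubgroup (S n) = fiberSquare i (Subgroup.normalClosure (Set.range fun a => r a n)) := by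
  obtain ⟨S, hS, hS'⟩ := exists_computable_pairsSubgroup_eq
    (g := Sum.elim (fun (x : L) _ => i (.of x)) fun a n => i (r a n))
    (h := Sum.elim (fun (x : L) _ => i (.of x)) fun _ _ => 1)
    (by rintro (x | a); exacts [.const _, hr a]) (by rintro (x | a) <;> exact .const _)
  refine ⟨S, hS, fun n => ?_⟩
  rw [hS', ← closure_eq_fiberSquare i (FreeGroup.closure_range_of L), ← Set.range_comp,
    ← Set.range_comp, ← Set.Sum.elim_range]
  congr 2
  funext x
  cases x <;> rfl

end Generators

/-- Unsolvability of the isomorphism problem for finitely generated subgroups of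
`F₂ × F₂`: no computable function decides whether the subgroups generated by two
given finite lists of elements are isomorphic. -/
theorem isomorphism_problem_F2xF2_unsolvable :
    ¬ ∃ f : List (Word2 × Word2) → List (Word2 × Word2) → Bool,
      Computable₂ f ∧
      ∀ S T : List (Word2 × Word2),
        (f S T = true ↔ Nonempty (↥(pairsSubgroup S) ≃* ↥(pairsSubgroup T))) := by
  rintro ⟨f, hf, hiso⟩
  obtain ⟨K, _, _, ι, _, ρ, pf, p, hdet, hterm, hp, hundec⟩ :=
    exists_affineRule_undecidable_reachability
  obtain ⟨ε, hε⟩ := exists_injective_nat (Letter K ι)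
  let i : FreeGroup (Letter K ι) →* FreeGroup Bool := FreeGroup.toRankTwo.comp (FreeGroup.map ε)
  have hi : Function.Injective i :=
    FreeGroup.toRankTwo_injective.comp (FreeGroup.map_injective hε)
  have := (Letter.finite_ruleRelators ρ pf).to_subtype
  obtain ⟨S, hS, hSeq⟩ := exists_computable_pairsSubgroup_eq_fiberSquare i
    (r := Sum.elim (fun (x : Letter.ruleRelators ρ pf) _ => x.1) fun o n =>
      Letter.killRelator (p n) o)
    (by rintro (x | o); exacts [.const (i x.1), Letter.computableFamily_killRelator i hp o])
  obtain ⟨T, -, hTeq⟩ := exists_computable_pairsSubgroup_eq_fiberSquare i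
    (r := fun (o : Option (BaseLetter K ι)) _ => .of (.inl o)) fun o => .const _
  have hSeq' : ∀ n, pairsSubgroup (S n) = fiberSquare i (Letter.relations ρ pf (p n)) := by
    intro n
    rw [hSeq]
    congr 2
    ext x
    simp [Letter.relators]
  have hTeq' : pairsSubgroup (T 0) = fiberSquare i (Letter.collapse K ι) := hTeq 0
  refine hundec (ComputablePred.computable_iff.2
    ⟨fun n => f (S n) (T 0), hf.comp hS (Computable.const _), funext fun n => propext ?_⟩)
  rw [hiso, hSeq', hTeq', Letter.nonempty_fiberSquare_mulEquiv_iff hi hdet hterm]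
end
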